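/- arXiv:quant-ph/0506001 — 10 statements merged into one kernel-verified Lean document; each statement's English description precedes it below -/
import Mathlib

section
/- Let C be a nonempty finite set, let p : C → ℝ be a probability distribution (p(c) ≥ 0 for all c and Σ_{c∈C} p(c) = 1), let D : C → ℝ be a function with D(c) ≥ 0 for all c, and let b ≥ 0 be a real number with Σ_{c∈C} p(c)·D(c) ≤ b. Then for every real r > 0, Σ_{c∈C} p(c)·2^{−r·(D(c) + 6·√(D(c)+1) + 4)} ≥ 2^{−r·(b + 6·√(b+1) + 4)}. -/
open Set

section Jensen

variable {𝕜 E β ι : Type*} [Field 𝕜] [LinearOrder 𝕜] [IsStrictOrderedRing 𝕜]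
  [AddCommGroup E] [Preorder E] [Module 𝕜 E]
  [AddCommGroup β] [PartialOrder β] [IsOrderedAddMonoid β] [Module 𝕜 β] [IsStrictOrderedModule 𝕜 β]
  {s : Set E} {f : E → β} {t : Finset ι} {w : ι → 𝕜} {x : ι → E} {b : E}

theorem map_le_sum_smul_of_convexOn_of_antitoneOn (hf : ConvexOn 𝕜 s f) (hf_anti : AntitoneOn f s)
    (hw_nonneg : ∀ i ∈ t, 0 ≤ w i) (hw_sum : ∑ i ∈ t, w i = 1) (hx : ∀ i ∈ t, x i ∈ s)
    (hb : b ∈ s) (hxb : ∑ i ∈ t, w i • x i ≤ b) :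
    f b ≤ ∑ i ∈ t, w i • f (x i) :=
  calc f b ≤ f (∑ i ∈ t, w i • x i) :=
        hf_anti (hf.1.sum_mem hw_nonneg hw_sum hx) hb hxb
    _ ≤ ∑ i ∈ t, w i • f (x i) := hf.map_sum_le hw_nonneg hw_sum hx

theorem sum_smul_le_map_of_concaveOn_of_monotoneOn (hf : ConcaveOn 𝕜 s f) (hf_mono : MonotoneOn f s)
    (hw_nonneg : ∀ i ∈ t, 0 ≤ w i) (hw_sum : ∑ i ∈ t, w i = 1) (hx : ∀ i ∈ t, x i ∈ s)
    (hb : b ∈ s) (hxb : ∑ i ∈ t, w i • x i ≤ b) :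
    ∑ i ∈ t, w i • f (x i) ≤ f b :=
  map_le_sum_smul_of_convexOn_of_antitoneOn (β := βᵒᵈ) hf.dual hf_mono.dual_right
    hw_nonneg hw_sum hx hb hxb

end Jensen

theorem convexOn_rpow_neg_mul {a : ℝ} (ha : 0 < a) (r : ℝ) :
    ConvexOn ℝ univ fun x : ℝ ↦ a ^ (-(r * x)) := by
  simpa only [LinearMap.neg_apply, LinearMap.mul_apply', preimage_univ, Function.comp_def] using
    (convexOn_rpow_left ha).comp_linearMap (-LinearMap.mul ℝ ℝ r)

theorem antitone_rpow_neg_mul {a r : ℝ} (ha : 1 ≤ a) (hr : 0 ≤ r) :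
    Antitone fun x : ℝ ↦ a ^ (-(r * x)) := fun _ _ hxy ↦
  Real.rpow_le_rpow_of_exponent_le ha (neg_le_neg (mul_le_mul_of_nonneg_left hxy hr))

theorem concaveOn_add_mul_sqrt_add {k : ℝ} (hk : 0 ≤ k) (c d : ℝ) :
    ConcaveOn ℝ (Ici (-c)) fun x ↦ x + k * √(x + c) + d := by
  have hsqrt : ConcaveOn ℝ (Ici (-c)) fun x ↦ √(x + c) := by
    simpa only [preimage_const_add_Ici, zero_sub, Function.comp_def] using
      Real.strictConcaveOn_sqrt.concaveOn.translate_left c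
  exact ((concaveOn_id (convex_Ici _)).add (hsqrt.smul hk)).add_const d

theorem monotone_add_mul_sqrt_add {k : ℝ} (hk : 0 ≤ k) (c d : ℝ) :
    Monotone fun x : ℝ ↦ x + k * √(x + c) + d := fun _ _ hxy ↦ by
  dsimp only
  gcongr

theorem qsc_averaging_step_general {E ι : Type*} [AddCommGroup E] [Preorder E] [Module ℝ E]
    {s : Set E} {f : E → ℝ} (hf : ConcaveOn ℝ s f) (hf_mono : MonotoneOn f s)
    {t : Finset ι} {p : ι → ℝ} (hp_nonneg : ∀ i ∈ t, 0 ≤ p i) (hp_sum : ∑ i ∈ t, p i = 1)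
    {D : ι → E} (hD : ∀ i ∈ t, D i ∈ s) {b : E} (hb : b ∈ s) (hDb : ∑ i ∈ t, p i • D i ≤ b)
    {a r : ℝ} (ha : 1 ≤ a) (hr : 0 ≤ r) :
    a ^ (-(r * f b)) ≤ ∑ i ∈ t, p i * a ^ (-(r * f (D i))) := by
  have hcost : ∑ i ∈ t, p i • f (D i) ≤ f b :=
    sum_smul_le_map_of_concaveOn_of_monotoneOn hf hf_mono hp_nonneg hp_sum hD hb hDb
  exact map_le_sum_smul_of_convexOn_of_antitoneOn
    (convexOn_rpow_neg_mul (zero_lt_one.trans_le ha) r)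
    ((antitone_rpow_neg_mul ha hr).antitoneOn univ)
    hp_nonneg hp_sum (fun _ _ ↦ mem_univ _) (mem_univ _) hcost

/-- Averaging step in the binding–concealing trade-off proof for quantum string
commitment: convexity of `x ↦ 2^(-r*x)` combined with concavity of `√`. -/
theorem qsc_averaging_step (C : Type*) [Fintype C] [Nonempty C]
    (p : C → ℝ) (hp_nonneg : ∀ c, 0 ≤ p c) (hp_sum : ∑ c, p c = 1)
    (D : C → ℝ) (hD_nonneg : ∀ c, 0 ≤ D c)
    (b : ℝ) (hb : 0 ≤ b) (hDb : ∑ c, p c * D c ≤ b) :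
    ∀ r : ℝ, 0 < r →
      ∑ c, p c * (2 : ℝ) ^ (-(r * (D c + 6 * Real.sqrt (D c + 1) + 4))) ≥
        (2 : ℝ) ^ (-(r * (b + 6 * Real.sqrt (b + 1) + 4))) := by
  intro r hr
  have h_Ici {x : ℝ} (hx : 0 ≤ x) : x ∈ Ici (-1) := neg_one_lt_zero.le.trans hx
  exact qsc_averaging_step_general (concaveOn_add_mul_sqrt_add (by norm_num) 1 4)
    ((monotone_add_mul_sqrt_add (by norm_num) 1 4).monotoneOn _) (fun c _ ↦ hp_nonneg c) hp_sum
    (fun c _ ↦ h_Ici (hD_nonneg c)) (h_Ici hb) hDb one_le_two hr.le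
end

section
/- For every real number b > 15, setting r = 1 + 1/b, one has (1 − 1/r)·(1 − 1/√r)·2^{−r·(b + 6·√(b+1) + 4)} ≥ 2^{−(b + 8·√(b+1) + 8)}. -/
/-!
Since `1 - u ≥ (1 - u ^ 2) / 2` for `u = 1 / √r`, the prefactor `(1 - 1 / r) * (1 - 1 / √r)` is at
least `(1 - 1 / r) ^ 2 / 2 = 1 / (2 * (b + 1) ^ 2)`, which by `x ^ 4 ≤ 4 ^ x` at `x = √(b + 1) ≥ 4`
costs at most `2 * √(b + 1) + 1` in the exponent. Multiplying `b + 6 * √(b + 1) + 4` by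
`r = 1 + 1 / b` costs at most another `3`.
-/

theorem rpow_le_rpow_swap_of_exp_one_le {x y : ℝ} (hx : Real.exp 1 ≤ x) (hxy : x ≤ y) :
    y ^ x ≤ x ^ y := by
  have hx₀ : 0 < x := (Real.exp_pos 1).trans_le hx
  have hy₀ : 0 < y := hx₀.trans_le hxy
  have hlog : Real.log y / y ≤ Real.log x / x :=
    Real.log_div_self_antitoneOn hx (hx.trans hxy) hxy
  rw [← Real.log_le_log_iff (by positivity) (by positivity), Real.log_rpow hy₀, Real.log_rpow hx₀,
    mul_comm x, mul_comm y]
  exact (div_le_div_iff₀ hy₀ hx₀).1 hlog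

theorem sq_le_two_rpow_two_mul_sqrt {x : ℝ} (hx : 16 ≤ x) : x ^ 2 ≤ 2 ^ (2 * √x) := by
  have hsqrt : 4 ≤ √x := Real.le_sqrt_of_sq_le (by linarith)
  have hexp : Real.exp 1 ≤ 4 := by linarith [Real.exp_one_lt_three]
  calc
    x ^ 2 = √x ^ (4 : ℝ) := by
      rw [show (4 : ℝ) = (2 * 2 : ℕ) by norm_num, Real.rpow_natCast, pow_mul,
        Real.sq_sqrt (by linarith)]
    _ ≤ 4 ^ √x := rpow_le_rpow_swap_of_exp_one_le hexp hsqrt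
    _ = 2 ^ (2 * √x) := by
      rw [Real.rpow_mul zero_le_two]
      norm_num

theorem half_one_sub_one_div_le_one_sub_one_div_sqrt {r : ℝ} (hr : 0 ≤ r) :
    (1 - 1 / r) / 2 ≤ 1 - 1 / √r := by
  have hsq : (1 / √r) ^ 2 = 1 / r := by rw [one_div_pow, Real.sq_sqrt hr]
  linarith [sq_nonneg (1 / √r - 1)]

theorem one_sub_one_div_one_add_one_div {K : Type*} [Field K] {b : K} (hb : b ≠ 0)
    (hb' : b + 1 ≠ 0) : 1 - 1 / (1 + 1 / b) = 1 / (b + 1) := by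
  field_simp
  ring

theorem two_rpow_neg_le_one_sub_one_div_mul_one_sub_one_div_sqrt {b : ℝ} (hb : 15 ≤ b) :
    (2 : ℝ) ^ (-(2 * √(b + 1) + 1)) ≤ (1 - 1 / (1 + 1 / b)) * (1 - 1 / √(1 + 1 / b)) := by
  have hb₀ : 0 < b := by linarith
  have hfactor : 1 - 1 / (1 + 1 / b) = 1 / (b + 1) :=
    one_sub_one_div_one_add_one_div hb₀.ne' (by positivity)
  calc
    (2 : ℝ) ^ (-(2 * √(b + 1) + 1)) = 1 / (2 ^ (2 * √(b + 1)) * 2) := by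
      rw [Real.rpow_neg zero_le_two, Real.rpow_add_one two_ne_zero, one_div]
    _ ≤ 1 / ((b + 1) ^ 2 * 2) := by
      gcongr
      exact sq_le_two_rpow_two_mul_sqrt (by linarith)
    _ = (1 - 1 / (1 + 1 / b)) * ((1 - 1 / (1 + 1 / b)) / 2) := by
      rw [hfactor]
      field_simp
    _ ≤ (1 - 1 / (1 + 1 / b)) * (1 - 1 / √(1 + 1 / b)) := by
      gcongr
      · rw [hfactor]
        positivity
      · exact half_one_sub_one_div_le_one_sub_one_div_sqrt (by positivity)

theorem one_add_one_div_mul_add_six_mul_sqrt_add_four_le {b : ℝ} (hb : 15 ≤ b) :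
    (1 + 1 / b) * (b + 6 * √(b + 1) + 4) ≤ b + 6 * √(b + 1) + 7 := by
  have hb₀ : 0 < b := by linarith
  have hsqrt : 4 ≤ √(b + 1) := Real.le_sqrt_of_sq_le (by linarith)
  have hsq : √(b + 1) ^ 2 = b + 1 := Real.sq_sqrt (by linarith)
  have hdiv : (6 * √(b + 1) + 4) / b ≤ 2 := by
    rw [div_le_iff₀ hb₀]
    linarith [mul_le_mul_of_nonneg_right hsqrt (Real.sqrt_nonneg (b + 1))]
  calc
    (1 + 1 / b) * (b + 6 * √(b + 1) + 4) = b + 6 * √(b + 1) + 5 + (6 * √(b + 1) + 4) / b := by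
      field_simp
      ring
    _ ≤ b + 6 * √(b + 1) + 7 := by linarith

/-- Numerical estimate used in the trade-off theorem for quantum string
commitment in the regime `b > 15`, with `r = 1 + 1/b`. -/
theorem qsc_estimate_large_b (b : ℝ) (hb : 15 < b) (r : ℝ) (hr : r = 1 + 1 / b) :
    (1 - 1 / r) * (1 - 1 / Real.sqrt r) *
        (2 : ℝ) ^ (-(r * (b + 6 * Real.sqrt (b + 1) + 4))) ≥
      (2 : ℝ) ^ (-(b + 8 * Real.sqrt (b + 1) + 8)) := by
  subst hr
  have hprefactor := two_rpow_neg_le_one_sub_one_div_mul_one_sub_one_div_sqrt hb.le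
  have hexponent := one_add_one_div_mul_add_six_mul_sqrt_add_four_le hb.le
  have hprefactor_nonneg : 0 ≤ (1 - 1 / (1 + 1 / b)) * (1 - 1 / √(1 + 1 / b)) :=
    (Real.rpow_nonneg zero_le_two _).trans hprefactor
  calc
    (2 : ℝ) ^ (-(b + 8 * √(b + 1) + 8))
        = 2 ^ (-(2 * √(b + 1) + 1)) * 2 ^ (-(b + 6 * √(b + 1) + 7)) := by
      rw [← Real.rpow_add two_pos]
      ring_nf
    _ ≤ (1 - 1 / (1 + 1 / b)) * (1 - 1 / √(1 + 1 / b)) *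
          2 ^ (-((1 + 1 / b) * (b + 6 * √(b + 1) + 4))) := by
      gcongr
      exact one_le_two
end

section
/- For every real number b ≥ 0 there exists a real number r > 1 such that (1 − 1/r)·(1 − 1/√r)·2^{−r·(b + 6·√(b+1) + 4)} ≥ 2^{−(b + 8·√(b+1) + 16)}. -/
/-!
Write `s = √(b + 1)`, so `b = s² - 1`, and take `r = 1 + 1 / (s + 1)`. The surplus `r - 1` of order
`1 / s` multiplies an exponent of order `s²`, hence costs only a linear term: the exponent becomes
at most `s² + 7s + 8`. Since `√x ≤ (1 + x) / 2`, the prefactor is at least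
`(1 - 1/r)² / 2 = 1 / (2(s + 2)²)`, and this quadratic loss is absorbed by `2 ^ (s + 4)`. Together
these account for the exponent `s² + 8s + 12 = b + 8s + 13`.
-/

lemma exp_one_mul_log_mul_le_rpow {a : ℝ} (ha : 0 < a) (x : ℝ) :
    Real.exp 1 * (Real.log a * x) ≤ a ^ x := by
  rw [Real.rpow_def_of_pos ha]
  exact Real.exp_one_mul_le_exp

lemma sq_le_two_rpow_add_one {x : ℝ} (hx : 0 ≤ x) : x ^ 2 ≤ (2 : ℝ) ^ (x + 1) := by
  have slope : 3 / 2 ≤ Real.exp 1 * Real.log 2 := by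
    nlinarith [Real.exp_one_gt_d9, Real.log_two_gt_d9]
  have linear_bound : 3 / 4 * x ≤ (2 : ℝ) ^ (x / 2) := by
    calc 3 / 4 * x = 3 / 2 * (x / 2) := by ring
      _ ≤ Real.exp 1 * Real.log 2 * (x / 2) := by gcongr
      _ = Real.exp 1 * (Real.log 2 * (x / 2)) := by ring
      _ ≤ (2 : ℝ) ^ (x / 2) := exp_one_mul_log_mul_le_rpow two_pos _
  calc x ^ 2 ≤ (3 / 4 * x) ^ 2 * 2 := by nlinarith [sq_nonneg x]
    _ ≤ ((2 : ℝ) ^ (x / 2)) ^ 2 * 2 := by gcongr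
    _ = (2 : ℝ) ^ (x + 1) := by
      rw [← Real.rpow_mul_natCast zero_le_two, Real.rpow_add_one two_ne_zero, Nat.cast_ofNat,
        div_mul_cancel₀ x two_ne_zero]

lemma sq_one_sub_one_div_div_two_le {r : ℝ} (hr : 1 ≤ r) :
    (1 - 1 / r) ^ 2 / 2 ≤ (1 - 1 / r) * (1 - 1 / √r) := by
  have hr₀ : 0 < r := zero_lt_one.trans_le hr
  have nonneg : 0 ≤ 1 - 1 / r := sub_nonneg.2 ((div_le_one hr₀).2 hr)
  have half_le : (1 - 1 / r) / 2 ≤ 1 - 1 / √r := by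
    have := Real.sqrt_one_add_le (x := 1 / r - 1) (by linarith [one_div_pos.2 hr₀])
    rw [add_sub_cancel, Real.sqrt_div zero_le_one, Real.sqrt_one] at this
    linarith
  calc (1 - 1 / r) ^ 2 / 2 = (1 - 1 / r) * ((1 - 1 / r) / 2) := by ring
    _ ≤ (1 - 1 / r) * (1 - 1 / √r) := by gcongr

lemma one_add_one_div_mul_quadratic_le {s : ℝ} (hs : -1 < s) :
    (1 + 1 / (s + 1)) * (s ^ 2 + 6 * s + 3) ≤ s ^ 2 + 7 * s + 8 := by
  have pos : 0 < s + 1 := by linarith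
  have division : (1 + 1 / (s + 1)) * (s ^ 2 + 6 * s + 3) = s ^ 2 + 7 * s + 8 - 2 / (s + 1) := by
    field_simp
    ring
  rw [division]
  exact sub_le_self _ (by positivity)

lemma two_rpow_neg_le_one_sub_mul_one_sub {t : ℝ} (ht : 0 < t) :
    (2 : ℝ) ^ (-(t + 3)) ≤ (1 - 1 / (1 + 1 / t)) * (1 - 1 / √(1 + 1 / t)) := by
  have quadratic_bound : 2 * (t + 1) ^ 2 ≤ (2 : ℝ) ^ (t + 3) := by
    calc 2 * (t + 1) ^ 2 ≤ 2 * (2 : ℝ) ^ (t + 1 + 1) := by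
          gcongr
          exact sq_le_two_rpow_add_one (by positivity)
      _ = (2 : ℝ) ^ (t + 3) := by
          rw [← Real.rpow_one_add' (by positivity) (by positivity)]
          ring_nf
  calc (2 : ℝ) ^ (-(t + 3)) = 1 / (2 : ℝ) ^ (t + 3) := by
        rw [Real.rpow_neg zero_le_two, one_div]
    _ ≤ 1 / (2 * (t + 1) ^ 2) := by gcongr
    _ = (1 - 1 / (1 + 1 / t)) ^ 2 / 2 := by
        field_simp
        ring
    _ ≤ (1 - 1 / (1 + 1 / t)) * (1 - 1 / √(1 + 1 / t)) :=
        sq_one_sub_one_div_div_two_le (le_add_of_nonneg_right (by positivity))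

theorem qsc_cheating_bound_general (b : ℝ) (hb : -1 ≤ b) :
    ∃ r : ℝ, 1 < r ∧
      (1 - 1 / r) * (1 - 1 / √r) * (2 : ℝ) ^ (-(r * (b + 6 * √(b + 1) + 4))) ≥
        (2 : ℝ) ^ (-(b + 8 * √(b + 1) + 13)) := by
  obtain ⟨s, hs, rfl⟩ : ∃ s : ℝ, 0 ≤ s ∧ b = s ^ 2 - 1 :=
    ⟨√(b + 1), Real.sqrt_nonneg _, by rw [Real.sq_sqrt (by linarith)]; ring⟩
  rw [sub_add_cancel, Real.sqrt_sq hs]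
  refine ⟨1 + 1 / (s + 1), lt_add_of_pos_right 1 (by positivity), ?_⟩
  have prefactor := two_rpow_neg_le_one_sub_mul_one_sub (add_pos_of_nonneg_of_pos hs one_pos)
  calc (2 : ℝ) ^ (-(s ^ 2 - 1 + 8 * s + 13))
      = (2 : ℝ) ^ (-(s + 1 + 3)) * (2 : ℝ) ^ (-(s ^ 2 + 7 * s + 8)) := by
        rw [← Real.rpow_add two_pos]
        ring_nf
    _ ≤ _ := by
        gcongr
        · exact (Real.rpow_nonneg zero_le_two _).trans prefactor
        · exact one_le_two
        · linarith [one_add_one_div_mul_quadratic_le (neg_one_lt_zero.trans_le hs)]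

/-- Key quantitative lemma behind the binding–concealing trade-off
`a + b + 8√(b+1) + 16 ≥ n` for quantum string commitment: for an optimal
choice of `r > 1` the cheating probability lower bound
`(1 − 1/r)(1 − 1/√r)·2^(−r·(b + 6√(b+1) + 4))` is at least
`2^(−(b + 8√(b+1) + 16))`. -/
theorem qsc_cheating_bound (b : ℝ) (hb : 0 ≤ b) :
    ∃ r : ℝ, 1 < r ∧
      (1 - 1 / r) * (1 - 1 / Real.sqrt r) *
          (2 : ℝ) ^ (-(r * (b + 6 * Real.sqrt (b + 1) + 4))) ≥
        (2 : ℝ) ^ (-(b + 8 * Real.sqrt (b + 1) + 16)) := by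
  obtain ⟨r, hr, bound⟩ := qsc_cheating_bound_general b (by linarith)
  exact ⟨r, hr, bound.trans' (Real.rpow_le_rpow_of_exponent_le one_le_two (by linarith))⟩
end

section
/- (Substate theorem.) Let d, d' be positive integers with d' ≥ d. Let σ and τ be density matrices on ℂ^d with τ positive definite. Let σ̄ : Fin d × Fin d' → ℂ be a unit vector that purifies σ, i.e., Σ_{j∈Fin d'} σ̄(i,j)·conj(σ̄(i',j)) = σ(i,i') for all i, i'. Let r > 1 be real, let k = D(σ‖τ) + 6·√(D(σ‖τ)+1) + 4, and let p = (r−1)/(r·2^{r·k}). Then there exist unit vectors φ, θ : Fin d × Fin d' → ℂ such that: (i) the vector τ̄ : Fin d × Fin d' × Fin 2 → ℂ defined by τ̄(i,j,1) = √p·φ(i,j) and τ̄(i,j,0) = √(1−p)·θ(i,j) is a purification of τ, i.e., Σ_{j,e} τ̄(i,j,e)·conj(τ̄(i',j,e)) = τ(i,i') for all i, i'; and (ii) the trace norm of the Hermitian matrix A on ℂ^d⊗ℂ^{d'} with entries A((i,j),(i',j')) = σ̄(i,j)·conj(σ̄(i',j')) − φ(i,j)·conj(φ(i',j')) satisfies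 ‖A‖₁ ≤ 2/√r. -/
open scoped ComplexOrder

/-- The (base-2) observational divergence `D(ρ‖σ)` between two states on `ℂ^d`:
the supremum over POVM elements `M` (i.e. `M` and `I − M` positive semidefinite)
of `Re(Tr(Mρ)) · log₂(Re(Tr(Mρ)) / Re(Tr(Mσ)))` (a term with `Re(Tr(Mρ)) = 0`
contributes `0`, as does `0 * log₂(0/·) = 0` here). -/
noncomputable def obsDiv {d : ℕ} (ρ σ : Matrix (Fin d) (Fin d) ℂ) : ℝ :=
  sSup {v : ℝ | ∃ M : Matrix (Fin d) (Fin d) ℂ, M.PosSemidef ∧ (1 - M).PosSemidef ∧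
    v = (M * ρ).trace.re * Real.logb 2 ((M * ρ).trace.re / (M * σ).trace.re)}

/-- The purification `τ̄` of `τ` built from the pure states `φ` and `θ`:
`τ̄(i,j,1) = √p·φ(i,j)` and `τ̄(i,j,0) = √(1−p)·θ(i,j)`. -/
noncomputable def tauBar {d d' : ℕ} (p : ℝ) (φ θ : Fin d × Fin d' → ℂ) :
    Fin d × Fin d' × Fin 2 → ℂ :=
  fun q => if q.2.2 = 1 then (Real.sqrt p : ℂ) * φ (q.1, q.2.1)
           else (Real.sqrt (1 - p) : ℂ) * θ (q.1, q.2.1)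

/-!
Let `S` be the `d × d'` matrix with entries `σ̄(i, j)`, so that `σ = S Sᴴ`, and put `T = 2^(rk) τ`.
Let `X` be the Frobenius-nearest point to `S` in the compact convex set
`{X | X Xᴴ ≤ T} = {T^(1/2) Z | ‖Z‖ ≤ 1}`. The optimality conditions are complementary slackness,
`(T - X Xᴴ)(S - X) = 0`, and `‖X‖² ≤ Re ⟨S, X⟩`. By slackness the projector `P` onto
`ker (T - X Xᴴ)` fixes `S - X`, so `S` and `X` agree off `P`, and `P T = P X Xᴴ`; hence
`1 - ‖X‖² = tr P (σ - T)`. Used as a POVM element, `P` makes this at most `1/r`, because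
`D(σ‖τ) ≤ k` forces `tr M σ ≤ 2^(rk) tr M τ + 1/r` for every `0 ≤ M ≤ 1`.

Thus `φ = X / ‖X‖` satisfies `p φ φᴴ ≤ τ` (as `d × d'` matrices) and `|⟨σ̄, φ⟩|² ≥ 1 - 1/r`. The
remainder `τ - p φ φᴴ` is purified by `θ`, and since the difference of two rank-one projectors has
rank at most two, the Cauchy–Schwarz inequality for its eigenvalues turns the overlap into the
trace norm bound.
-/

open Matrix
open scoped MatrixOrder

theorem nonpos_of_forall_mul_le_sq_mul {a b : ℝ}
    (h : ∀ t ∈ Set.Ioc (0 : ℝ) 1, t * a ≤ t ^ 2 * b) : a ≤ 0 := by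
  have hlim : Filter.Tendsto (fun t : ℝ ↦ t * b) (nhdsWithin 0 (Set.Ioi 0)) (nhds 0) :=
    ((continuous_mul_const b).tendsto' 0 0 (zero_mul b)).mono_left nhdsWithin_le_nhds
  refine ge_of_tendsto hlim ?_
  filter_upwards [Ioc_mem_nhdsGT one_pos] with t ht
  exact le_of_mul_le_mul_left (by linarith [h t ht, sq t]) ht.1

section LoewnerOrder

variable {m n : Type*} [Fintype m]

theorem re_trace_conjTranspose_mul_comm [Fintype n] (A B : Matrix m n ℂ) :
    (Aᴴ * B).trace.re = (Bᴴ * A).trace.re := by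
  rw [← Complex.conj_re, ← Complex.star_def, ← trace_conjTranspose, conjTranspose_mul,
    conjTranspose_conjTranspose]

theorem re_trace_conjTranspose_mul_self_sub_smul [Fintype n] (D E : Matrix m n ℂ) (t : ℝ) :
    ((D - t • E)ᴴ * (D - t • E)).trace.re =
      (Dᴴ * D).trace.re - t * (2 * (Dᴴ * E).trace.re) + t ^ 2 * (Eᴴ * E).trace.re := by
  simp only [conjTranspose_sub, conjTranspose_smul, star_trivial, Matrix.mul_sub, Matrix.sub_mul,
    Matrix.smul_mul, Matrix.mul_smul, trace_sub, trace_smul, Complex.sub_re, Complex.smul_re,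
    smul_eq_mul, re_trace_conjTranspose_mul_comm E D]
  ring

theorem mul_mul_conjTranspose_le [Finite n] {A B : Matrix m m ℂ} (h : A ≤ B) (C : Matrix n m ℂ) :
    C * A * Cᴴ ≤ C * B * Cᴴ := by
  rw [le_iff, ← Matrix.sub_mul, ← Matrix.mul_sub]
  exact (le_iff.mp h).mul_mul_conjTranspose_same C

theorem re_trace_mul_nonneg {A B : Matrix m m ℂ} (hA : 0 ≤ A) (hB : 0 ≤ B) :
    0 ≤ (A * B).trace.re := by
  classical
  obtain ⟨C, rfl⟩ := CStarAlgebra.nonneg_iff_eq_star_mul_self.mp hA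
  rw [star_eq_conjTranspose, Matrix.mul_assoc, trace_mul_comm]
  exact (Complex.nonneg_iff.mp (hB.posSemidef.mul_mul_conjTranspose_same C).trace_nonneg).1

theorem re_trace_mul_le_re_trace_mul {A B C : Matrix m m ℂ} (hC : 0 ≤ C) (h : A ≤ B) :
    (C * A).trace.re ≤ (C * B).trace.re := by
  simpa [Matrix.mul_sub] using re_trace_mul_nonneg hC (sub_nonneg.mpr h)

theorem mul_eq_zero_of_re_trace_mul_nonpos {A B : Matrix m m ℂ} (hA : 0 ≤ A) (hB : 0 ≤ B)
    (h : (A * B).trace.re ≤ 0) : A * B = 0 := by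
  classical
  obtain ⟨C, rfl⟩ := CStarAlgebra.nonneg_iff_eq_star_mul_self.mp hA
  obtain ⟨D, rfl⟩ := CStarAlgebra.nonneg_iff_eq_mul_star_self.mp hB
  simp only [star_eq_conjTranspose] at h ⊢
  have htrace : (Cᴴ * C * (D * Dᴴ)).trace = ((C * D)ᴴ * (C * D)).trace := by
    rw [← Matrix.mul_assoc, trace_mul_comm, conjTranspose_mul, Matrix.mul_assoc, Matrix.mul_assoc]
  have hnonneg := Complex.nonneg_iff.mp (posSemidef_conjTranspose_mul_self (C * D)).trace_nonneg
  have hCD : C * D = 0 := trace_conjTranspose_mul_self_eq_zero_iff.mp <|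
    Complex.ext (le_antisymm (htrace ▸ h) hnonneg.1) hnonneg.2.symm
  rw [Matrix.mul_assoc, ← Matrix.mul_assoc C, hCD, Matrix.zero_mul, Matrix.mul_zero]

theorem continuousOn_real_spectrum [DecidableEq m] (A : Matrix m m ℂ) (f : ℝ → ℝ) :
    ContinuousOn f (spectrum ℝ A) :=
  A.finite_real_spectrum.continuousOn f

theorem exists_effect_onto_ker [DecidableEq m] {N : Matrix m m ℂ} (hN : IsSelfAdjoint N) :
    ∃ P : Matrix m m ℂ, 0 ≤ P ∧ P ≤ 1 ∧ P * N = 0 ∧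
      ∀ W : Matrix m n ℂ, N * W = 0 → P * W = W := by
  have hcont := continuousOn_real_spectrum N
  -- The junk value `0⁻¹ = 0` makes `x ↦ 1 - x⁻¹ * x` the indicator function of `{0}`.
  have hP : cfc (fun x : ℝ ↦ 1 - x⁻¹ * x) N = 1 - cfc (fun x : ℝ ↦ x⁻¹) N * N := by
    rw [cfc_sub _ _ N (hcont _) (hcont _), cfc_const_one ℝ N hN,
      cfc_mul _ _ N (hcont _) (hcont _), cfc_id' ℝ N hN]
  refine ⟨cfc (fun x : ℝ ↦ 1 - x⁻¹ * x) N, cfc_nonneg fun x _ ↦ ?_,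
    cfc_le_one _ _ fun x _ ↦ ?_, ?_, fun W hW ↦ ?_⟩
  · simpa using inv_mul_le_one
  · by_cases hx : x = 0 <;> simp [hx]
  · nth_rewrite 2 [← cfc_id' ℝ N hN]
    rw [← cfc_mul _ _ N (hcont _) (hcont _)]
    convert cfc_zero ℝ N with x
    by_cases hx : x = 0 <;> simp [hx]
  · rw [hP, Matrix.sub_mul, Matrix.one_mul, Matrix.mul_assoc, hW, Matrix.mul_zero, sub_zero]

variable [Fintype n]

open scoped Matrix.Norms.L2Operator

theorem l2_opNorm_le_one_iff [DecidableEq m] [DecidableEq n] (Z : Matrix m n ℂ) :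
    ‖Z‖ ≤ 1 ↔ Z * Zᴴ ≤ 1 := by
  rw [← CStarAlgebra.norm_le_one_iff_of_nonneg _ (posSemidef_self_mul_conjTranspose Z).nonneg,
    ← l2_opNorm_conjTranspose, ← sq_le_one_iff₀ (norm_nonneg _), sq,
    ← l2_opNorm_conjTranspose_mul_self, conjTranspose_conjTranspose]

theorem exists_polar_decomposition [DecidableEq n] (W : Matrix m n ℂ) :
    ∃ (A : Matrix m m ℂ) (V : Matrix m n ℂ), 0 ≤ A ∧ ‖V‖ ≤ 1 ∧ A * V = W ∧ W * Vᴴ = A := by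
  classical
  set H := W * Wᴴ with hH
  have hH_nonneg : 0 ≤ H := (posSemidef_self_mul_conjTranspose W).nonneg
  have hid : cfc (fun x : ℝ ↦ x) H = H := cfc_id' ℝ H (.of_nonneg hH_nonneg)
  have hcont := continuousOn_real_spectrum H
  let f : ℝ → ℝ := fun x ↦ (√x)⁻¹
  have hf : (cfc f H)ᴴ = cfc f H := cfc_predicate f H
  have hHf : H * cfc f H = cfc Real.sqrt H := by
    nth_rewrite 1 [← hid]
    rw [← cfc_mul _ _ H (hcont _) (hcont _)]
    exact cfc_congr fun x _ ↦ Real.div_sqrt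
  have hsqrt : cfc Real.sqrt H * cfc f H * H = H := by
    nth_rewrite 3 [← hid]
    rw [← cfc_mul _ _ H (hcont _) (hcont _), ← cfc_mul _ _ H (hcont _) (hcont _)]
    refine (cfc_congr fun x hx ↦ ?_).trans hid
    obtain rfl | hx := (spectrum_nonneg_of_nonneg hH_nonneg hx).eq_or_lt
    · simp
    · simp [f, mul_inv_cancel₀ (Real.sqrt_pos.mpr hx).ne']
  refine ⟨cfc Real.sqrt H, cfc f H * W, cfc_nonneg fun x _ ↦ x.sqrt_nonneg, ?_, ?_, ?_⟩
  · rw [l2_opNorm_le_one_iff, conjTranspose_mul, hf, Matrix.mul_assoc, ← Matrix.mul_assoc W,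
      hHf, ← cfc_mul _ _ H (hcont _) (hcont _)]
    exact cfc_le_one _ _ fun x _ ↦ inv_mul_le_one
  · have hker : (cfc Real.sqrt H * cfc f H - 1) * W = 0 := by
      rw [← mul_self_mul_conjTranspose_eq_zero, ← hH, Matrix.sub_mul, hsqrt, Matrix.one_mul,
        sub_self]
    rwa [Matrix.sub_mul, Matrix.one_mul, sub_eq_zero, Matrix.mul_assoc] at hker
  · rw [conjTranspose_mul, hf, ← Matrix.mul_assoc, hHf]

/- For the polar decomposition `W = A * V`, comparing `Z` with `V` gives `Re tr (A Z Vᴴ) ≥ tr A`;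
expanding `Re tr (A (Z - V) (Z - V)ᴴ) ≥ 0` then yields `Re tr (A (1 - Z Zᴴ)) ≤ 0`. -/
theorem one_sub_mul_eq_zero_of_norming [DecidableEq m] [DecidableEq n] {W Z : Matrix m n ℂ}
    (hZ : ‖Z‖ ≤ 1) (hmax : ∀ Y : Matrix m n ℂ, ‖Y‖ ≤ 1 → (Wᴴ * Y).trace.re ≤ (Wᴴ * Z).trace.re) :
    (1 - Z * Zᴴ) * W = 0 := by
  obtain ⟨A, V, hA, hV, rfl, hAV⟩ := exists_polar_decomposition W
  have hA_conj : Aᴴ = A := hA.posSemidef.isHermitian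
  have hcross : ((A * V)ᴴ * Z).trace.re = (A * V * Zᴴ).trace.re := by
    rw [re_trace_conjTranspose_mul_comm, trace_mul_comm]
  have hnorming : A.trace.re ≤ (A * V * Zᴴ).trace.re := by
    rw [← hcross]
    refine le_trans (le_of_eq ?_) (hmax V hV)
    rw [re_trace_conjTranspose_mul_comm, trace_mul_comm, hAV]
  have hsymm : (A * (Z * Vᴴ)).trace.re = (A * V * Zᴴ).trace.re := by
    rw [← hcross, conjTranspose_mul, hA_conj, trace_mul_comm (Vᴴ * A), trace_mul_comm A,
      Matrix.mul_assoc]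
  have hsq : 0 ≤ (A * ((Z - V) * (Z - V)ᴴ)).trace.re :=
    re_trace_mul_nonneg hA (posSemidef_self_mul_conjTranspose _).nonneg
  have hA_compl : A * (1 - Z * Zᴴ) = 0 := by
    refine mul_eq_zero_of_re_trace_mul_nonpos hA
      (sub_nonneg.mpr ((l2_opNorm_le_one_iff Z).mp hZ)) ?_
    simp only [conjTranspose_sub, Matrix.mul_sub, Matrix.sub_mul, trace_sub, Complex.sub_re,
      hsymm, ← Matrix.mul_assoc A V, hAV, Matrix.mul_one] at hsq ⊢
    linarith
  have hcompl_A : (1 - Z * Zᴴ) * A = 0 := by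
    simpa [hA_conj] using congrArg conjTranspose hA_compl
  rw [← Matrix.mul_assoc, hcompl_A, Matrix.zero_mul]

theorem exists_contraction_variational_inequality [DecidableEq n] (R : Matrix m m ℂ)
    (S : Matrix m n ℂ) :
    ∃ Z : Matrix m n ℂ, ‖Z‖ ≤ 1 ∧ ∀ Y : Matrix m n ℂ, ‖Y‖ ≤ 1 →
      ((S - R * Z)ᴴ * (R * (Y - Z))).trace.re ≤ 0 := by
  let f : Matrix m n ℂ → ℝ := fun Z ↦ ((S - R * Z)ᴴ * (S - R * Z)).trace.re
  have hf : Continuous f := by fun_prop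
  obtain ⟨Z, hZ, hmin⟩ := (isCompact_closedBall (0 : Matrix m n ℂ) 1).exists_isMinOn
    ⟨0, by simp⟩ hf.continuousOn
  refine ⟨Z, by simpa using hZ, fun Y hY ↦ ?_⟩
  suffices 2 * ((S - R * Z)ᴴ * (R * (Y - Z))).trace.re ≤ 0 by linarith
  refine nonpos_of_forall_mul_le_sq_mul (b := ((R * (Y - Z))ᴴ * (R * (Y - Z))).trace.re)
    fun t ht ↦ ?_
  have hmove : f Z ≤ f (Z + t • (Y - Z)) :=
    hmin ((convex_closedBall 0 1).add_smul_sub_mem hZ (by simpa using hY)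
      (Set.Ioc_subset_Icc_self ht))
  have hstep : S - R * (Z + t • (Y - Z)) = S - R * Z - t • (R * (Y - Z)) := by
    rw [Matrix.mul_add, Matrix.mul_smul, sub_sub]
  simp only [f, hstep, re_trace_conjTranspose_mul_self_sub_smul] at hmove
  linarith

theorem exists_mul_conjTranspose_le_complementary_slackness (R : Matrix m m ℂ) (S : Matrix m n ℂ) :
    ∃ X : Matrix m n ℂ, X * Xᴴ ≤ R * Rᴴ ∧ (R * Rᴴ - X * Xᴴ) * (S - X) = 0 ∧
      0 ≤ ((S - X)ᴴ * X).trace.re := by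
  classical
  obtain ⟨Z, hZ, hvar⟩ := exists_contraction_variational_inequality R S
  have hgap : R * Rᴴ - R * Z * (R * Z)ᴴ = R * (1 - Z * Zᴴ) * Rᴴ := by
    simp only [conjTranspose_mul, Matrix.mul_sub, Matrix.sub_mul, Matrix.mul_one, Matrix.mul_assoc]
  have hZ_norming := one_sub_mul_eq_zero_of_norming (W := Rᴴ * (S - R * Z)) hZ fun Y hY ↦ by
    have := hvar Y hY
    rw [Matrix.mul_sub, Matrix.mul_sub, trace_sub, Complex.sub_re, sub_nonpos] at this
    simpa only [conjTranspose_mul, conjTranspose_conjTranspose, Matrix.mul_assoc] using this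
  refine ⟨R * Z, ?_, ?_, ?_⟩
  · rw [← sub_nonneg, hgap]
    simpa using mul_mul_conjTranspose_le
      (sub_nonneg.mpr ((l2_opNorm_le_one_iff Z).mp hZ)) R
  · rw [hgap, Matrix.mul_assoc, Matrix.mul_assoc, hZ_norming, Matrix.mul_zero]
  · simpa using hvar 0 (by simp)

theorem exists_large_overlap_of_forall_effect [DecidableEq m] {T : Matrix m m ℂ} (hT : 0 ≤ T)
    (S : Matrix m n ℂ) {ε : ℝ}
    (h : ∀ M : Matrix m m ℂ, 0 ≤ M → M ≤ 1 → (M * (S * Sᴴ - T)).trace.re ≤ ε) :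
    ∃ X : Matrix m n ℂ, X * Xᴴ ≤ T ∧ (S * Sᴴ).trace.re - ε ≤ (X * Xᴴ).trace.re ∧
      (X * Xᴴ).trace.re ≤ (Sᴴ * X).trace.re := by
  classical
  obtain ⟨R, rfl⟩ := CStarAlgebra.nonneg_iff_eq_mul_star_self.mp hT
  rw [star_eq_conjTranspose] at h ⊢
  obtain ⟨X, hX, hcompl, hoverlap⟩ := exists_mul_conjTranspose_le_complementary_slackness R S
  obtain ⟨P, hP_nonneg, hP_le, hP_gap, hP_ker⟩ :=
    exists_effect_onto_ker (n := n) (.of_nonneg (sub_nonneg.mpr hX))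
  have hP_conj : Pᴴ = P := hP_nonneg.posSemidef.isHermitian
  have hoff : (1 - P) * S = (1 - P) * X := by
    rw [← sub_eq_zero, ← Matrix.mul_sub, Matrix.sub_mul, Matrix.one_mul, hP_ker _ hcompl, sub_self]
  have hoff_conj : Sᴴ * (1 - P) = Xᴴ * (1 - P) := by
    simpa [hP_conj] using congrArg conjTranspose hoff
  have hoff_trace : ((1 - P) * (S * Sᴴ)).trace = ((1 - P) * (X * Xᴴ)).trace := by
    rw [← Matrix.mul_assoc, hoff, Matrix.mul_assoc, trace_mul_comm, Matrix.mul_assoc, hoff_conj,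
      ← Matrix.mul_assoc, trace_mul_comm]
  refine ⟨X, hX, ?_, ?_⟩
  · have htest := h P hP_nonneg hP_le
    rw [Matrix.mul_sub, sub_eq_zero] at hP_gap
    rw [Matrix.mul_sub, hP_gap, trace_sub, Complex.sub_re] at htest
    have hoff_re := congrArg Complex.re hoff_trace
    simp only [Matrix.sub_mul, Matrix.one_mul, trace_sub, Complex.sub_re] at hoff_re
    linarith
  · rw [conjTranspose_sub, Matrix.sub_mul, trace_sub, Complex.sub_re, trace_mul_comm Xᴴ,
      sub_nonneg] at hoverlap
    exact hoverlap

end LoewnerOrder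

section Substate

variable {m n : Type*} [Fintype m] [Fintype n]

theorem exists_mul_conjTranspose_eq {A : Matrix m m ℂ} (hA : 0 ≤ A)
    (hcard : Fintype.card m ≤ Fintype.card n) : ∃ Θ : Matrix m n ℂ, Θ * Θᴴ = A := by
  classical
  obtain ⟨B, rfl⟩ := CStarAlgebra.nonneg_iff_eq_mul_star_self.mp hA
  obtain ⟨e⟩ := Function.Embedding.nonempty_of_card_le hcard
  let E : Matrix m n ℂ := (1 : Matrix n n ℂ).submatrix e id
  have hE : E * Eᴴ = 1 := by
    rw [conjTranspose_submatrix, conjTranspose_one,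
      ← submatrix_mul _ _ _ _ _ Function.bijective_id, Matrix.one_mul, submatrix_one _ e.injective]
  refine ⟨B * E, ?_⟩
  rw [conjTranspose_mul, Matrix.mul_assoc, ← Matrix.mul_assoc E, hE, Matrix.one_mul,
    star_eq_conjTranspose]

theorem exists_complementary_state {ρ τ : Matrix m m ℂ} {p : ℝ} (hp : p < 1) (hle : p • ρ ≤ τ)
    (hρ : ρ.trace = 1) (hτ : τ.trace = 1) (hcard : Fintype.card m ≤ Fintype.card n) :
    ∃ Θ : Matrix m n ℂ, (Θ * Θᴴ).trace = 1 ∧ p • ρ + (1 - p) • (Θ * Θᴴ) = τ := by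
  have hq : 0 < 1 - p := sub_pos.mpr hp
  have hrest : 0 ≤ (1 - p)⁻¹ • (τ - p • ρ) :=
    smul_nonneg (inv_nonneg.mpr hq.le) (sub_nonneg.mpr hle)
  obtain ⟨Θ, hΘ⟩ := exists_mul_conjTranspose_eq hrest hcard
  refine ⟨Θ, ?_, ?_⟩
  · have hq' : (1 - p : ℂ) ≠ 0 := by exact_mod_cast hq.ne'
    rw [hΘ, trace_smul, trace_sub, trace_smul, hρ, hτ]
    simp [hq']
  · rw [hΘ, smul_inv_smul₀ hq.ne', add_sub_cancel]

theorem ofReal_re_trace_mul_conjTranspose_self (X : Matrix m n ℂ) :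
    (((X * Xᴴ).trace.re : ℝ) : ℂ) = (X * Xᴴ).trace :=
  Complex.ext rfl (Complex.nonneg_iff.mp (posSemidef_self_mul_conjTranspose X).trace_nonneg).2

theorem exists_substate [DecidableEq m] {τ : Matrix m m ℂ} {S : Matrix m n ℂ} {p K : ℝ}
    (hp : 0 < p) (hK : 0 < K) (hτ : 0 ≤ τ) (hS : (S * Sᴴ).trace = 1)
    (h : ∀ M : Matrix m m ℂ, 0 ≤ M → M ≤ 1 →
      (M * (S * Sᴴ)).trace.re ≤ K * (M * τ).trace.re + (1 - p * K)) :
    ∃ Φ : Matrix m n ℂ, (Φ * Φᴴ).trace = 1 ∧ p • (Φ * Φᴴ) ≤ τ ∧ p * K ≤ ‖(Sᴴ * Φ).trace‖ ^ 2 := by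
  obtain ⟨X, hX, hweight, hoverlap⟩ := exists_large_overlap_of_forall_effect
    (smul_nonneg hK.le hτ) S (ε := 1 - p * K) fun M hM hM' ↦ by
      simpa [Matrix.mul_sub, sub_le_iff_le_add', add_comm] using h M hM hM'
  set x := (X * Xᴴ).trace.re with hx
  rw [hS, Complex.one_re, sub_sub_cancel] at hweight
  have hx_pos : 0 < x := (mul_pos hp hK).trans_le hweight
  have hΦ : ((√x)⁻¹ • X) * ((√x)⁻¹ • X)ᴴ = x⁻¹ • (X * Xᴴ) := by
    rw [conjTranspose_smul, star_trivial, Matrix.smul_mul, Matrix.mul_smul, smul_smul, ← mul_inv,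
      Real.mul_self_sqrt hx_pos.le]
  refine ⟨(√x)⁻¹ • X, ?_, ?_, ?_⟩
  · rw [hΦ, trace_smul, ← ofReal_re_trace_mul_conjTranspose_self, ← hx, Complex.real_smul,
      ← Complex.ofReal_mul, inv_mul_cancel₀ hx_pos.ne', Complex.ofReal_one]
  · rw [hΦ]
    calc p • x⁻¹ • (X * Xᴴ) ≤ p • x⁻¹ • K • τ := by gcongr
      _ = (p * K / x) • τ := by rw [smul_smul, smul_smul]; congr 1; ring
      _ ≤ (1 : ℝ) • τ := by gcongr; exact (div_le_one hx_pos).mpr hweight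
      _ = τ := one_smul ℝ τ
  · have hsqrt : √x ≤ ‖(Sᴴ * ((√x)⁻¹ • X)).trace‖ := by
      refine le_trans ?_ (Complex.re_le_norm _)
      rw [Matrix.mul_smul, trace_smul, Complex.smul_re, smul_eq_mul, inv_mul_eq_div,
        le_div_iff₀ (Real.sqrt_pos.mpr hx_pos), Real.mul_self_sqrt hx_pos.le]
      exact hoverlap
    calc p * K ≤ √x ^ 2 := hweight.trans_eq (Real.sq_sqrt hx_pos.le).symm
      _ ≤ _ := by gcongr

end Substate

section ObservationalDivergence

open scoped Matrix.Norms.L2Operator in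
theorem exists_le_smul_of_posDef {m : Type*} [Finite m] {σ τ : Matrix m m ℂ}
    (hσ : 0 ≤ σ) (hτ : τ.PosDef) : ∃ L : ℝ, 1 ≤ L ∧ σ ≤ L • τ := by
  classical
  cases nonempty_fintype m
  obtain _ | _ := subsingleton_or_nontrivial (Matrix m m ℂ)
  · exact ⟨1, le_rfl, (Subsingleton.elim _ _).le⟩
  have hτ' := hτ.isStrictlyPositive
  obtain ⟨c, hc, hcτ⟩ := (CFC.exists_pos_algebraMap_le_iff hτ'.isSelfAdjoint).mpr fun x hx ↦
    hτ'.spectrum_pos hx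
  rw [Algebra.algebraMap_eq_smul_one] at hcτ
  refine ⟨‖σ‖ / c + 1, le_add_of_nonneg_left (by positivity), ?_⟩
  calc σ ≤ ‖σ‖ • (1 : Matrix m m ℂ) := by
        rw [← Algebra.algebraMap_eq_smul_one]
        exact IsSelfAdjoint.le_algebraMap_norm_self (.of_nonneg hσ)
    _ = (‖σ‖ / c) • c • (1 : Matrix m m ℂ) := by rw [smul_smul, div_mul_cancel₀ _ hc.ne']
    _ ≤ (‖σ‖ / c) • τ := by gcongr
    _ ≤ (‖σ‖ / c + 1) • τ := by
        gcongr
        · exact hτ.posSemidef.nonneg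
        · linarith

variable {d : ℕ} {σ τ M : Matrix (Fin d) (Fin d) ℂ}

theorem le_obsDiv (hσ : 0 ≤ σ) (hτ : τ.PosDef) (hM : 0 ≤ M) (hM' : M ≤ 1) :
    (M * σ).trace.re * Real.logb 2 ((M * σ).trace.re / (M * τ).trace.re) ≤ obsDiv σ τ := by
  obtain ⟨L, hL, hστ⟩ := exists_le_smul_of_posDef hσ hτ
  refine le_csSup ⟨σ.trace.re * Real.logb 2 L, ?_⟩ ⟨M, hM.posSemidef, le_iff.mp hM', rfl⟩
  rintro _ ⟨N, hN, hN', rfl⟩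
  have ha := re_trace_mul_nonneg hN.nonneg hσ
  have ha_le : (N * σ).trace.re ≤ σ.trace.re := by
    simpa [Matrix.sub_mul] using re_trace_mul_nonneg hN'.nonneg hσ
  have hab : (N * σ).trace.re ≤ L * (N * τ).trace.re := by
    simpa using re_trace_mul_le_re_trace_mul hN.nonneg hστ
  obtain ha_eq | ha_pos := ha.eq_or_lt
  · rw [← ha_eq, zero_mul]
    exact mul_nonneg (ha.trans ha_le) (Real.logb_nonneg one_lt_two hL)
  have hb_pos : 0 < (N * τ).trace.re :=
    pos_of_mul_pos_right (ha_pos.trans_le hab) (zero_le_one.trans hL)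
  have hlog : Real.logb 2 ((N * σ).trace.re / (N * τ).trace.re) ≤ Real.logb 2 L :=
    Real.logb_le_logb_of_le one_lt_two (div_pos ha_pos hb_pos) ((div_le_iff₀ hb_pos).mpr hab)
  calc _ ≤ (N * σ).trace.re * Real.logb 2 L := mul_le_mul_of_nonneg_left hlog ha
    _ ≤ _ := mul_le_mul_of_nonneg_right ha_le (Real.logb_nonneg one_lt_two hL)

theorem obsDiv_nonneg (hσ : 0 ≤ σ) (hτ : τ.PosDef) : 0 ≤ obsDiv σ τ := by
  simpa using le_obsDiv hσ hτ le_rfl zero_le_one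

theorem le_rpow_mul_add_of_mul_logb_le {a b r k : ℝ} (hr : 0 < r) (hk : 0 ≤ k) (hb : 0 ≤ b)
    (hab : b = 0 → a = 0) (h : a * Real.logb 2 (a / b) ≤ k) :
    a ≤ 2 ^ (r * k) * b + r⁻¹ := by
  by_contra! hlt
  have ha : r⁻¹ < a := lt_of_le_of_lt (le_add_of_nonneg_left (by positivity)) hlt
  have ha_pos : 0 < a := (inv_pos.mpr hr).trans ha
  have hb_pos : 0 < b := hb.lt_of_ne' fun hb0 ↦ ha_pos.ne' (hab hb0)
  have hratio : (2 : ℝ) ^ (r * k) < a / b :=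
    (lt_div_iff₀ hb_pos).mpr ((lt_add_of_pos_right _ (inv_pos.mpr hr)).trans hlt)
  have hlog : r * k < Real.logb 2 (a / b) :=
    (Real.lt_logb_iff_rpow_lt one_lt_two (div_pos ha_pos hb_pos)).mpr hratio
  have hra : 1 < r * a := (inv_lt_iff_one_lt_mul₀' hr).mp ha
  nlinarith [mul_lt_mul_of_pos_left hlog ha_pos, mul_le_mul_of_nonneg_right hra.le hk]

theorem re_trace_mul_le_of_obsDiv_le {r k : ℝ} (hσ : 0 ≤ σ) (hτ : τ.PosDef) (hr : 0 < r)
    (hk : obsDiv σ τ ≤ k) (hM : 0 ≤ M) (hM' : M ≤ 1) :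
    (M * σ).trace.re ≤ 2 ^ (r * k) * (M * τ).trace.re + r⁻¹ := by
  refine le_rpow_mul_add_of_mul_logb_le hr ((obsDiv_nonneg hσ hτ).trans hk)
    (re_trace_mul_nonneg hM hτ.posSemidef.nonneg) (fun hb ↦ ?_) ((le_obsDiv hσ hτ hM hM').trans hk)
  obtain ⟨L, -, hστ⟩ := exists_le_smul_of_posDef hσ hτ
  have hab : (M * σ).trace.re ≤ L * (M * τ).trace.re := by
    simpa using re_trace_mul_le_re_trace_mul hM hστ
  rw [hb, mul_zero] at hab
  exact le_antisymm hab (re_trace_mul_nonneg hM hσ)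

end ObservationalDivergence

section TraceNorm

variable {ι : Type*} [Fintype ι]

theorem sum_eigenvalues_sq [DecidableEq ι] {A : Matrix ι ι ℂ} (hA : A.IsHermitian) :
    ∑ i, hA.eigenvalues i ^ 2 = (A * A).trace.re := by
  conv_rhs => rw [hA.spectral_theorem, ← map_mul, Unitary.conjStarAlgAut_apply, trace_mul_cycle,
    Unitary.coe_star_mul_self, Matrix.one_mul, diagonal_mul_diagonal, trace_diagonal]
  simp [sq]

theorem sq_sum_abs_eigenvalues_le [DecidableEq ι] {A : Matrix ι ι ℂ} (hA : A.IsHermitian) :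
    (∑ i, |hA.eigenvalues i|) ^ 2 ≤ A.rank * (A * A).trace.re := by
  rw [hA.rank_eq_card_non_zero_eigs, Fintype.card_subtype, ← sum_eigenvalues_sq hA]
  set support := Finset.univ.filter fun i ↦ hA.eigenvalues i ≠ 0
  have hsupport : ∑ i, |hA.eigenvalues i| = ∑ i ∈ support, |hA.eigenvalues i| :=
    (Finset.sum_filter_of_ne fun i _ hi ↦ by simpa using hi).symm
  calc (∑ i, |hA.eigenvalues i|) ^ 2
      ≤ support.card * ∑ i ∈ support, |hA.eigenvalues i| ^ 2 := by
        rw [hsupport]; exact sq_sum_le_card_mul_sum_sq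
    _ ≤ support.card * ∑ i, hA.eigenvalues i ^ 2 := by
        simp only [sq_abs]
        gcongr
        exact Finset.subset_univ _

theorem rank_vecMulVec_sub_vecMulVec_le (u v w x : ι → ℂ) :
    (vecMulVec u v - vecMulVec w x).rank ≤ 2 := by
  have hfactor : vecMulVec u v - vecMulVec w x = (of ![u, -w])ᵀ * of ![v, x] := by
    ext i j
    simp [mul_apply, vecMulVec_apply, sub_eq_add_neg]
  rw [hfactor]
  exact (rank_mul_le_left _ _).trans ((rank_le_card_width _).trans_eq (Fintype.card_fin 2))

theorem sum_norm_sq_eq_one_iff {v : ι → ℂ} : ∑ i, ‖v i‖ ^ 2 = 1 ↔ star v ⬝ᵥ v = 1 := by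
  have hcast : ((∑ i, ‖v i‖ ^ 2 : ℝ) : ℂ) = star v ⬝ᵥ v := by
    simp [dotProduct, ← Complex.conj_mul']
  rw [← hcast, Complex.ofReal_eq_one]

theorem trace_sq_vecMulVec_sub {s f : ι → ℂ} (hs : star s ⬝ᵥ s = 1) (hf : star f ⬝ᵥ f = 1) :
    ((vecMulVec s (star s) - vecMulVec f (star f)) *
      (vecMulVec s (star s) - vecMulVec f (star f))).trace.re = 2 - 2 * ‖star s ⬝ᵥ f‖ ^ 2 := by
  have hfs : star f ⬝ᵥ s = starRingEnd ℂ (star s ⬝ᵥ f) := by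
    rw [← Complex.star_def, star_dotProduct]
  have htrace : ((vecMulVec s (star s) - vecMulVec f (star f)) *
      (vecMulVec s (star s) - vecMulVec f (star f))).trace =
        2 - 2 * (star s ⬝ᵥ f * starRingEnd ℂ (star s ⬝ᵥ f)) := by
    simp only [Matrix.sub_mul, Matrix.mul_sub, vecMulVec_mul_vecMulVec, trace_sub,
      trace_vecMulVec, dotProduct_smul, hs, hf, hfs, dotProduct_comm s (star _),
      dotProduct_comm f (star _), smul_eq_mul]
    ring
  rw [htrace, Complex.mul_conj']
  norm_cast

theorem sum_abs_eigenvalues_vecMulVec_sub_le [DecidableEq ι] {s f : ι → ℂ} {ε : ℝ}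
    (hs : star s ⬝ᵥ s = 1) (hf : star f ⬝ᵥ f = 1) (hoverlap : 1 - ε ≤ ‖star s ⬝ᵥ f‖ ^ 2)
    (hA : (vecMulVec s (star s) - vecMulVec f (star f)).IsHermitian) :
    ∑ i, |hA.eigenvalues i| ≤ 2 * √ε := by
  have hsq := sq_sum_abs_eigenvalues_le hA
  have hrank : ((vecMulVec s (star s) - vecMulVec f (star f)).rank : ℝ) ≤ 2 := by
    exact_mod_cast rank_vecMulVec_sub_vecMulVec_le _ _ _ _
  rw [← Real.sqrt_sq (zero_le_two (α := ℝ)), ← Real.sqrt_mul (sq_nonneg 2)]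
  refine Real.le_sqrt_of_sq_le (hsq.trans ?_)
  rw [trace_sq_vecMulVec_sub hs hf]
  have hnonneg : 0 ≤ 2 - 2 * ‖star s ⬝ᵥ f‖ ^ 2 := by
    rw [← trace_sq_vecMulVec_sub hs hf, ← sum_eigenvalues_sq hA]
    positivity
  nlinarith

end TraceNorm

theorem star_vec_transpose_dotProduct_vec_transpose {m n : Type*} [Fintype m] [Fintype n]
    (A B : Matrix m n ℂ) : star (vec Aᵀ) ⬝ᵥ vec Bᵀ = (Aᴴ * B).trace := by
  rw [star_vec_dotProduct_vec, ← trace_transpose, transpose_mul, transpose_transpose,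
    conjTranspose_transpose, trace_mul_comm]
  rfl

theorem sum_tauBar_mul_conj_tauBar {d d' : ℕ} {p : ℝ} (hp : 0 ≤ p) (hp' : p ≤ 1)
    (Φ Θ : Matrix (Fin d) (Fin d') ℂ) (i i' : Fin d) :
    ∑ j, ∑ e, tauBar p (vec Φᵀ) (vec Θᵀ) (i, j, e) *
        starRingEnd ℂ (tauBar p (vec Φᵀ) (vec Θᵀ) (i', j, e)) =
      (p • (Φ * Φᴴ) + (1 - p) • (Θ * Θᴴ)) i i' := by
  have hsqrt {q : ℝ} (hq : 0 ≤ q) (z w : ℂ) : (√q * z) * (√q * w) = q * (z * w) := by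
    rw [mul_mul_mul_comm, ← Complex.ofReal_mul, Real.mul_self_sqrt hq]
  simp only [tauBar, Fin.sum_univ_two, zero_ne_one, if_false, if_true, map_mul,
    Complex.conj_ofReal, hsqrt hp, hsqrt (sub_nonneg.mpr hp'), vec, transpose_apply,
    Matrix.add_apply, Matrix.smul_apply, mul_apply, conjTranspose_apply, Complex.real_smul,
    Finset.mul_sum, ← Finset.sum_add_distrib, Complex.star_def]
  exact Finset.sum_congr rfl fun j _ ↦ add_comm _ _

theorem substate_weight_mem_Ioo {r K : ℝ} (hr : 1 < r) (hK : 1 ≤ K) :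
    (r - 1) / (r * K) ∈ Set.Ioo 0 1 := by
  refine ⟨div_pos (sub_pos.mpr hr) (by positivity), (div_lt_one (by positivity)).mpr ?_⟩
  nlinarith

theorem substate_theorem_general {d d' : ℕ} (hdd' : d ≤ d') {σ τ : Matrix (Fin d) (Fin d) ℂ}
    (hτ : τ.PosDef) (hτtr : τ.trace = 1)
    {σbar : Fin d × Fin d' → ℂ} (hσbar_unit : ∑ q, ‖σbar q‖ ^ 2 = 1)
    (hσbar_pur : ∀ i i' : Fin d,
      ∑ j : Fin d', σbar (i, j) * starRingEnd ℂ (σbar (i', j)) = σ i i')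
    {r : ℝ} (hr : 1 < r) {k : ℝ} (hk : obsDiv σ τ ≤ k)
    {p : ℝ} (hp : p = (r - 1) / (r * (2 : ℝ) ^ (r * k))) :
    ∃ φ θ : Fin d × Fin d' → ℂ,
      (∑ q, ‖φ q‖ ^ 2 = 1) ∧ (∑ q, ‖θ q‖ ^ 2 = 1) ∧
      (∀ i i' : Fin d,
        ∑ j : Fin d', ∑ e : Fin 2,
          tauBar p φ θ (i, j, e) * starRingEnd ℂ (tauBar p φ θ (i', j, e)) = τ i i') ∧
      ∃ hA : (Matrix.of fun q q' : Fin d × Fin d' =>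
          σbar q * starRingEnd ℂ (σbar q') - φ q * starRingEnd ℂ (φ q')).IsHermitian,
        ∑ q, |hA.eigenvalues q| ≤ 2 / Real.sqrt r := by
  have hr_pos : 0 < r := one_pos.trans hr
  obtain ⟨S, rfl⟩ : ∃ S : Matrix (Fin d) (Fin d') ℂ, vec Sᵀ = σbar :=
    ⟨of (Function.curry σbar), rfl⟩
  obtain rfl : S * Sᴴ = σ := ext fun i i' ↦ hσbar_pur i i'
  have hσ : 0 ≤ S * Sᴴ := (posSemidef_self_mul_conjTranspose S).nonneg
  rw [sum_norm_sq_eq_one_iff] at hσbar_unit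
  have hS : (S * Sᴴ).trace = 1 := by
    rw [trace_mul_comm, ← star_vec_transpose_dotProduct_vec_transpose, hσbar_unit]
  set K : ℝ := 2 ^ (r * k)
  have hK : 1 ≤ K := Real.one_le_rpow one_le_two
    (mul_nonneg hr_pos.le ((obsDiv_nonneg hσ hτ).trans hk))
  obtain ⟨hp_pos, hp_lt⟩ := hp ▸ substate_weight_mem_Ioo hr hK
  have hpK : p * K = 1 - r⁻¹ := by rw [hp]; field_simp
  obtain ⟨Φ, hΦ, hΦτ, hoverlap⟩ := exists_substate hp_pos (one_pos.trans_le hK)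
    hτ.posSemidef.nonneg hS fun M hM hM' ↦ by
      rw [hpK, sub_sub_cancel]
      exact re_trace_mul_le_of_obsDiv_le hσ hτ hr_pos hk hM hM'
  obtain ⟨Θ, hΘ, hmix⟩ := exists_complementary_state (n := Fin d') hp_lt hΦτ hΦ hτtr (by simpa)
  rw [trace_mul_comm, ← star_vec_transpose_dotProduct_vec_transpose] at hΦ hΘ
  rw [hpK, ← star_vec_transpose_dotProduct_vec_transpose] at hoverlap
  refine ⟨vec Φᵀ, vec Θᵀ, sum_norm_sq_eq_one_iff.mpr hΦ, sum_norm_sq_eq_one_iff.mpr hΘ,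
    fun i i' ↦ ?_, (posSemidef_vecMulVec_self_star _).isHermitian.sub
      (posSemidef_vecMulVec_self_star _).isHermitian, ?_⟩
  · rw [sum_tauBar_mul_conj_tauBar hp_pos.le hp_lt.le, hmix]
  · rw [div_eq_mul_inv, ← Real.sqrt_inv]
    exact sum_abs_eigenvalues_vecMulVec_sub_le hσbar_unit hΦ hoverlap _

/-- **Substate theorem** (Jain, Radhakrishnan, Sen). -/
theorem substate_theorem (d d' : ℕ) (hd : 0 < d) (hdd' : d ≤ d')
    (σ τ : Matrix (Fin d) (Fin d) ℂ)
    (hσ : σ.PosSemidef) (hσtr : σ.trace = 1)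
    (hτ : τ.PosDef) (hτtr : τ.trace = 1)
    (σbar : Fin d × Fin d' → ℂ) (hσbar_unit : ∑ q, ‖σbar q‖ ^ 2 = 1)
    (hσbar_pur : ∀ i i' : Fin d,
      ∑ j : Fin d', σbar (i, j) * starRingEnd ℂ (σbar (i', j)) = σ i i')
    (r : ℝ) (hr : 1 < r)
    (k : ℝ) (hk : k = obsDiv σ τ + 6 * Real.sqrt (obsDiv σ τ + 1) + 4)
    (p : ℝ) (hp : p = (r - 1) / (r * (2 : ℝ) ^ (r * k))) :
    ∃ φ θ : Fin d × Fin d' → ℂ,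
      (∑ q, ‖φ q‖ ^ 2 = 1) ∧ (∑ q, ‖θ q‖ ^ 2 = 1) ∧
      (∀ i i' : Fin d,
        ∑ j : Fin d', ∑ e : Fin 2,
          tauBar p φ θ (i, j, e) * starRingEnd ℂ (tauBar p φ θ (i', j, e)) = τ i i') ∧
      ∃ hA : (Matrix.of fun q q' : Fin d × Fin d' =>
          σbar q * starRingEnd ℂ (σbar q') - φ q * starRingEnd ℂ (φ q')).IsHermitian,
        ∑ q, |hA.eigenvalues q| ≤ 2 / Real.sqrt r := by
  exact substate_theorem_general hdd' hτ hτtr hσbar_unit hσbar_pur hr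
    (by linarith [Real.sqrt_nonneg (obsDiv σ τ + 1)]) hp
end

section
/- (Local transition theorem.) Let h, k be positive integers and let ρ be a density matrix on ℂ^k. Let φ₁, φ₂ : Fin h × Fin k → ℂ be two unit vectors in ℂ^h⊗ℂ^k that both purify ρ, i.e., for a = 1, 2 and all j, j' ∈ Fin k, Σ_{i∈Fin h} φ_a(i,j)·conj(φ_a(i,j')) = ρ(j,j'). Then there exists a unitary h×h complex matrix U such that for all i ∈ Fin h and j ∈ Fin k, Σ_{i'∈Fin h} U(i,i')·φ₁(i',j) = φ₂(i,j), i.e., (U ⊗ I)φ₁ = φ₂. -/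
open scoped ComplexOrder

/-!
Read `φ : ι × κ → 𝕜` as a matrix whose columns are the vectors `φ(·, j)`. Its partial trace over
the first factor is the transpose of the Gram matrix of these columns, so two purifications of the
same `ρ` have columns with equal Gram matrices. For families `v` and `w` with equal Gram matrices,
`∑ c j • v j ↦ ∑ c j • w j` is a well-defined isometry between the spans, and on a
finite-dimensional space it extends to a unitary.
-/

open Matrix

section Isometry

variable {𝕜 E F M κ : Type*} [RCLike 𝕜]
  [NormedAddCommGroup E] [InnerProductSpace 𝕜 E] [NormedAddCommGroup F] [InnerProductSpace 𝕜 F]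
  [AddCommGroup M] [Module 𝕜 M]

theorem norm_linearCombination_eq_of_gram_eq {v : κ → E} {w : κ → F}
    (hvw : gram 𝕜 v = gram 𝕜 w) (c : κ →₀ 𝕜) :
    ‖Finsupp.linearCombination 𝕜 v c‖ = ‖Finsupp.linearCombination 𝕜 w c‖ := by
  have hinner (i j : κ) : inner 𝕜 (v i) (v j) = inner 𝕜 (w i) (w j) := congr_fun₂ hvw i j
  simp only [norm_eq_sqrt_re_inner (𝕜 := 𝕜), Finsupp.linearCombination_apply, Finsupp.sum_inner,
    Finsupp.inner_sum, inner_smul_left, inner_smul_right, hinner]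

theorem exists_linearIsometry_range_of_norm_eq {f : M →ₗ[𝕜] E} {g : M →ₗ[𝕜] F}
    (hfg : ∀ x, ‖f x‖ = ‖g x‖) :
    ∃ L : f.range →ₗᵢ[𝕜] F, ∀ x, L (f.rangeRestrict x) = g x := by
  have hbound : ∃ C : ℝ, ∀ x, ‖g x‖ ≤ C * ‖f x‖ := ⟨1, fun x ↦ by rw [one_mul, hfg]⟩
  have hL (x : M) : g.compLeftInverse f (f.rangeRestrict x) = g x :=
    g.compLeftInverse_apply_of_bdd f hbound x _ rfl
  refine ⟨⟨(g.compLeftInverse f).toLinearMap, fun y ↦ ?_⟩, hL⟩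
  obtain ⟨x, rfl⟩ := f.surjective_rangeRestrict y
  exact (congrArg norm (hL x)).trans (hfg x).symm

theorem exists_linearIsometryEquiv_of_gram_eq [FiniteDimensional 𝕜 E] {v w : κ → E}
    (hvw : gram 𝕜 v = gram 𝕜 w) : ∃ V : E ≃ₗᵢ[𝕜] E, ∀ j, V (v j) = w j := by
  obtain ⟨L, hL⟩ :=
    exists_linearIsometry_range_of_norm_eq (norm_linearCombination_eq_of_gram_eq hvw)
  refine ⟨L.extend.toLinearIsometryEquiv rfl, fun j ↦ ?_⟩
  simpa [← L.extend_apply] using hL (Finsupp.single j 1)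

end Isometry

section Matrix

variable {𝕜 ι κ : Type*} [RCLike 𝕜] [Fintype ι]

theorem gram_toLp_col (A : Matrix ι κ 𝕜) : gram 𝕜 (fun j ↦ WithLp.toLp 2 (A.col j)) = Aᴴ * A :=
  gram_eq_conjTranspose_mul (EuclideanSpace.basisFun ι 𝕜) _

theorem exists_mem_unitaryGroup_mul_eq_of_conjTranspose_mul_self_eq [DecidableEq ι]
    {A B : Matrix ι κ 𝕜} (hAB : Aᴴ * A = Bᴴ * B) : ∃ U ∈ unitaryGroup ι 𝕜, U * A = B := by
  obtain ⟨V, hV⟩ := exists_linearIsometryEquiv_of_gram_eq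
    ((gram_toLp_col A).trans (hAB.trans (gram_toLp_col B).symm))
  let b := EuclideanSpace.basisFun ι 𝕜
  have hcol (j : κ) : V.toLinearMap.toMatrix b.toBasis b.toBasis *ᵥ A.col j = B.col j := by
    have hrepr := LinearMap.toMatrix_mulVec_repr b.toBasis b.toBasis V.toLinearMap
      (WithLp.toLp 2 (A.col j))
    exact hrepr.trans (by ext i; simp [b, hV])
  exact ⟨_, V.toMatrix_mem_unitaryGroup b b, Matrix.ext fun i j ↦ congr_fun (hcol j) i⟩

theorem conjTranspose_mul_self_curry_eq_transpose {ρ : Matrix κ κ 𝕜} {φ : ι × κ → 𝕜}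
    (hφ : ∀ j j', ∑ i, φ (i, j) * starRingEnd 𝕜 (φ (i, j')) = ρ j j') :
    (of (Function.curry φ))ᴴ * of (Function.curry φ) = ρᵀ := by
  ext j j'
  simp [mul_apply, ← hφ, mul_comm]

theorem local_transition_theorem_general [DecidableEq ι] {ρ : Matrix κ κ 𝕜} {φ₁ φ₂ : ι × κ → 𝕜}
    (hφ₁ : ∀ j j', ∑ i, φ₁ (i, j) * starRingEnd 𝕜 (φ₁ (i, j')) = ρ j j')
    (hφ₂ : ∀ j j', ∑ i, φ₂ (i, j) * starRingEnd 𝕜 (φ₂ (i, j')) = ρ j j') :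
    ∃ U : Matrix ι ι 𝕜, U * Uᴴ = 1 ∧ Uᴴ * U = 1 ∧
      ∀ i j, ∑ i', U i i' * φ₁ (i', j) = φ₂ (i, j) := by
  obtain ⟨U, hU, hUφ⟩ := exists_mem_unitaryGroup_mul_eq_of_conjTranspose_mul_self_eq
    ((conjTranspose_mul_self_curry_eq_transpose hφ₁).trans
      (conjTranspose_mul_self_curry_eq_transpose hφ₂).symm)
  exact ⟨U, mem_unitaryGroup_iff.1 hU, mem_unitaryGroup_iff'.1 hU, congr_fun₂ hUφ⟩

end Matrix

/-- **Local transition theorem**: any two purifications of the same density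
matrix are related by a local unitary on the purifying system. -/
theorem local_transition_theorem (h k : ℕ) (hh : 0 < h) (hk : 0 < k)
    (ρ : Matrix (Fin k) (Fin k) ℂ) (hρ : ρ.PosSemidef) (hρtr : ρ.trace = 1)
    (φ₁ φ₂ : Fin h × Fin k → ℂ)
    (hφ₁_unit : ∑ q, ‖φ₁ q‖ ^ 2 = 1) (hφ₂_unit : ∑ q, ‖φ₂ q‖ ^ 2 = 1)
    (hφ₁_pur : ∀ j j' : Fin k,
      ∑ i : Fin h, φ₁ (i, j) * starRingEnd ℂ (φ₁ (i, j')) = ρ j j')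
    (hφ₂_pur : ∀ j j' : Fin k,
      ∑ i : Fin h, φ₂ (i, j) * starRingEnd ℂ (φ₂ (i, j')) = ρ j j') :
    ∃ U : Matrix (Fin h) (Fin h) ℂ,
      U * U.conjTranspose = 1 ∧ U.conjTranspose * U = 1 ∧
      ∀ (i : Fin h) (j : Fin k), ∑ i' : Fin h, U i i' * φ₁ (i', j) = φ₂ (i, j) :=
  local_transition_theorem_general hφ₁_pur hφ₂_pur
end

section
/- Let X be a nonempty finite set, let d be a positive integer, and let E : x ↦ ρ_x assign to each x ∈ X a positive definite density matrix ρ_x on ℂ^d. Let b ≥ 0 be a real number and suppose that for every probability distribution q on X (q(x) ≥ 0, Σ_x q(x) = 1), the divergence information of the ensemble {q(x), ρ_x} satisfies Σ_{x∈X} q(x)·D(ρ_x ‖ Σ_{y∈X} q(y)·ρ_y) ≤ b (i.e., the maximum possible divergence information of the encoding E is at most b). Then there exists a probability distribution q on X such that, with ρ := Σ_{y∈X} q(y)·ρ_y, for every x ∈ X one has D(ρ_x ‖ ρ) ≤ b. -/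
/-!
An encoder picks `q` to make `∑ x, q x * D(ρ x ‖ σ)` large and a decoder picks a mixture `σ` of the
`ρ x` to make it small. Each measurement contributes `p * log (p / s)`, which is convex in `s`, so
`D(ρ x ‖ ·)` is a supremum of continuous convex functions, and the payoff, being linear in `q`, has
a saddle point by Sion's minimax theorem. Answering `q` by its own mixture keeps the payoff at most
`b`, hence so does the decoder's saddle strategy against every `q`, in particular against each
point mass, and that strategy is a mixture of the `ρ x`.
-/

open scoped ComplexOrder

section Minimax

theorem convexOn_finset_sum {𝕜 ι E β : Type*} [Semiring 𝕜] [PartialOrder 𝕜] [AddCommMonoid E]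
    [SMul 𝕜 E] [AddCommMonoid β] [PartialOrder β] [IsOrderedAddMonoid β] [Module 𝕜 β] {s : Set E}
    {t : Finset ι} {f : ι → E → β} (hs : Convex 𝕜 s) (hf : ∀ i ∈ t, ConvexOn 𝕜 s (f i)) :
    ConvexOn 𝕜 s fun x ↦ ∑ i ∈ t, f i x := by
  rw [← Finset.sum_fn]
  exact Finset.sum_induction f (ConvexOn 𝕜 s) (fun _ _ ↦ ConvexOn.add) (convexOn_const 0 hs) hf

theorem convexOn_ciSup {𝕜 E β : Type*} {ι : Sort*} [Nonempty ι] [Semiring 𝕜] [PartialOrder 𝕜]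
    [AddCommMonoid E] [SMul 𝕜 E] [AddCommMonoid β] [ConditionallyCompleteLattice β]
    [IsOrderedAddMonoid β] [SMul 𝕜 β] [PosSMulMono 𝕜 β] {s : Set E} {f : ι → E → β}
    (hbdd : ∀ x ∈ s, BddAbove (Set.range fun i ↦ f i x)) (hf : ∀ i, ConvexOn 𝕜 s (f i)) :
    ConvexOn 𝕜 s fun x ↦ ⨆ i, f i x := by
  refine ⟨(hf (Classical.arbitrary ι)).1, fun x hx y hy a b ha hb hab ↦ ciSup_le fun i ↦ ?_⟩
  calc f i (a • x + b • y) ≤ a • f i x + b • f i y := (hf i).2 hx hy ha hb hab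
    _ ≤ a • (⨆ i, f i x) + b • ⨆ i, f i y := by
      gcongr
      exacts [le_ciSup (hbdd x hx) i, le_ciSup (hbdd y hy) i]

theorem exists_forall_le_of_forall_exists_sum_smul_le {X E : Type*} [Fintype X] [Nonempty X]
    [AddCommGroup E] [Module ℝ E] [TopologicalSpace E] [IsTopologicalAddGroup E]
    [ContinuousSMul ℝ E] {K : Set E} (hK : IsCompact K) (hKc : Convex ℝ K) {f : X → E → ℝ}
    (hf : ∀ x, ConvexOn ℝ K (f x)) (hf' : ∀ x, LowerSemicontinuousOn (f x) K) {b : ℝ}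
    (hb : ∀ q ∈ stdSimplex ℝ X, ∃ σ ∈ K, ∑ x, q x • f x σ ≤ b) :
    ∃ σ ∈ K, ∀ x, f x σ ≤ b := by
  classical
  have hΔ : (stdSimplex ℝ X).Nonempty := ⟨_, single_mem_stdSimplex ℝ (Classical.arbitrary X)⟩
  have hK_ne : K.Nonempty := let ⟨q, hq⟩ := hΔ; let ⟨σ, hσ, _⟩ := hb q hq; ⟨σ, hσ⟩
  have hlsc (q) (hq : q ∈ stdSimplex ℝ X) :
      LowerSemicontinuousOn (fun σ ↦ ∑ x, q x • f x σ) K :=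
    lowerSemicontinuousOn_sum fun x _ ↦
      (continuous_const_smul (q x)).comp_lowerSemicontinuousOn (hf' x)
        (monotone_smul_left_of_nonneg (hq.1 x))
  have hconvex (q) (hq : q ∈ stdSimplex ℝ X) : ConvexOn ℝ K fun σ ↦ ∑ x, q x • f x σ :=
    convexOn_finset_sum hKc fun x _ ↦ (hf x).smul (hq.1 x)
  let payoff (σ : E) : (X → ℝ) →ₗ[ℝ] ℝ := Fintype.linearCombination ℝ fun x ↦ f x σ
  obtain ⟨σ, hσ, q, hq, hsaddle⟩ :=
    Sion.exists_isSaddlePointOn (f := fun σ q ↦ payoff σ q) hK_ne hKc hK hlsc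
      (fun q hq ↦ (hconvex q hq).quasiconvexOn) (convex_stdSimplex ℝ X) hΔ
      (isCompact_stdSimplex ℝ X)
      (fun σ _ ↦ (payoff σ).continuous_of_finiteDimensional.continuousOn.upperSemicontinuousOn)
      (fun σ _ ↦ ((payoff σ).concaveOn (convex_stdSimplex ℝ X)).quasiconcaveOn)
  obtain ⟨τ, hτ, hτb⟩ := hb q hq
  refine ⟨σ, hσ, fun x ↦ ?_⟩
  calc f x σ = payoff σ (Pi.single x 1) := by simp [payoff]
    _ ≤ payoff τ q := hsaddle τ hτ _ (single_mem_stdSimplex ℝ x)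
    _ ≤ b := hτb

end Minimax

section Logb

open Real

variable {b p : ℝ}

theorem convexOn_mul_logb_div (hb : 1 < b) (hp : 0 ≤ p) :
    ConvexOn ℝ (Set.Ioi 0) fun s ↦ p * logb b (p / s) := by
  rcases hp.eq_or_lt with rfl | hp
  · simpa using convexOn_const (0 : ℝ) (convex_Ioi (0 : ℝ))
  have hneg_log : ConvexOn ℝ (Set.Ioi 0) fun s ↦ (p / log b) • (-log s) :=
    strictConcaveOn_log_Ioi.concaveOn.neg.smul (div_nonneg hp.le (log_pos hb).le)
  refine (hneg_log.add_const (p * logb b p)).congr fun s hs ↦ ?_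
  have hs_ne : s ≠ 0 := ne_of_gt hs
  simp only [Pi.add_apply, smul_eq_mul, logb, log_div hp.ne' hs_ne]
  ring

theorem continuousOn_mul_logb_div : ContinuousOn (fun s ↦ p * logb b (p / s)) (Set.Ioi 0) := by
  rcases eq_or_ne p 0 with rfl | hp
  · simpa using continuousOn_const
  have hne (s : ℝ) (hs : s ∈ Set.Ioi 0) : s ≠ 0 := ne_of_gt hs
  exact continuousOn_const.mul <| ((continuousOn_const.div continuousOn_id hne).log
    fun s hs ↦ div_ne_zero hp (hne s hs)).div_const _

theorem mul_logb_div_le {c s : ℝ} (hb : 1 < b) (hp : 0 ≤ p) (hc : 0 < c) (hs : c * p ≤ s) :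
    p * logb b (p / s) ≤ p * logb b c⁻¹ := by
  rcases hp.eq_or_lt with rfl | hp
  · simp
  have hs_pos : 0 < s := (mul_pos hc hp).trans_le hs
  have hratio : p / s ≤ c⁻¹ := by rwa [div_le_iff₀ hs_pos, le_inv_mul_iff₀ hc]
  exact mul_le_mul_of_nonneg_left (logb_le_logb_of_le hb (div_pos hp hs_pos) hratio) hp.le

end Logb

/-- The elements of an ordered real vector space that lie above some positive multiple of `x`. For
positive semidefinite matrices these are the `y` whose support contains that of `x`, that is, those
for which the supremum defining `D(x‖y)` is finite. -/
def dominators {E : Type*} [SMul ℝ E] [LE E] (x : E) : Set E :=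
  {y | ∃ c : ℝ, 0 < c ∧ c • x ≤ y}

theorem convex_dominators {E : Type*} [AddCommGroup E] [PartialOrder E] [IsOrderedAddMonoid E]
    [Module ℝ E] [PosSMulMono ℝ E] (x : E) : Convex ℝ (dominators x) := by
  rintro y ⟨c, hc, hy⟩ z ⟨e, he, hz⟩ a b ha hb hab
  refine ⟨a • c + b • e, convex_Ioi (0 : ℝ) hc he ha hb hab, ?_⟩
  calc (a • c + b • e) • x = a • c • x + b • e • x := by rw [add_smul, smul_assoc, smul_assoc]
    _ ≤ a • y + b • z := by gcongr

theorem mem_dominators_of_isStrictlyPositive {A : Type*} [CStarAlgebra A] [PartialOrder A]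
    [StarOrderedRing A] {x y : A} (hx : IsSelfAdjoint x) (hy : IsStrictlyPositive y) :
    y ∈ dominators x := by
  rcases subsingleton_or_nontrivial A with _ | _
  · exact ⟨1, one_pos, (Subsingleton.elim _ _).le⟩
  obtain ⟨r, hr, hry⟩ : ∃ r > 0, algebraMap ℝ A r ≤ y :=
    (CFC.exists_pos_algebraMap_le_iff hy.isSelfAdjoint).2 fun _ ↦ hy.spectrum_pos
  have hnorm : 0 < ‖x‖ + 1 := by positivity
  refine ⟨r / (‖x‖ + 1), div_pos hr hnorm, ?_⟩
  calc (r / (‖x‖ + 1)) • x ≤ (r / (‖x‖ + 1)) • algebraMap ℝ A (‖x‖ + 1) := by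
        gcongr
        exact hx.le_algebraMap_norm_self.trans
          (algebraMap_mono A (le_add_of_nonneg_right zero_le_one))
    _ = algebraMap ℝ A r := by
        rw [Algebra.smul_def, ← map_mul, div_mul_cancel₀ _ hnorm.ne']
    _ ≤ y := hry

section Matrix

open scoped MatrixOrder

open scoped Matrix.Norms.L2Operator in
theorem mem_dominators_of_posDef {n : Type*} [Finite n] {A B : Matrix n n ℂ}
    (hA : A.IsHermitian) (hB : B.PosDef) : B ∈ dominators A := by
  classical
  have := Fintype.ofFinite n
  exact mem_dominators_of_isStrictlyPositive hA.isSelfAdjoint hB.isStrictlyPositive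

variable {n : Type*} [Fintype n]

theorem trace_mul_nonneg {𝕜 : Type*} [RCLike 𝕜] {M A : Matrix n n 𝕜} (hM : 0 ≤ M) (hA : 0 ≤ A) :
    0 ≤ (M * A).trace := by
  classical
  obtain ⟨B, rfl⟩ := CStarAlgebra.nonneg_iff_eq_star_mul_self.1 hA
  rw [← Matrix.mul_assoc, Matrix.trace_mul_comm, ← Matrix.mul_assoc]
  exact ((Matrix.nonneg_iff_posSemidef.1 hM).mul_mul_conjTranspose_same B).trace_nonneg

/-- The Born rule `A ↦ Re (Tr (M A))`: for a state `A`, the probability of the outcome described by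
the POVM element `M`. -/
noncomputable def bornRule (M : Matrix n n ℂ) : Matrix n n ℂ →ₗ[ℝ] ℝ :=
  Complex.reLm ∘ₗ Matrix.traceLinearMap n ℝ ℂ ∘ₗ LinearMap.mulLeft ℝ M

variable {M ρ σ : Matrix n n ℂ}

theorem bornRule_nonneg (hM : 0 ≤ M) (hρ : 0 ≤ ρ) : 0 ≤ bornRule M ρ :=
  (Complex.nonneg_iff.1 (trace_mul_nonneg hM hρ)).1

theorem bornRule_mono (hM : 0 ≤ M) : Monotone (bornRule M) := fun ρ σ h ↦ by
  simpa using bornRule_nonneg hM (sub_nonneg.2 h)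

theorem bornRule_le_re_trace [DecidableEq n] (hM : M ≤ 1) (hρ : 0 ≤ ρ) :
    bornRule M ρ ≤ ρ.trace.re := by
  have h := bornRule_nonneg (sub_nonneg.2 hM) hρ
  simpa [bornRule, sub_mul] using h

theorem bornRule_pos_of_mem_dominators (hM : 0 ≤ M) (hρ : 0 < bornRule M ρ)
    (hσ : σ ∈ dominators ρ) : 0 < bornRule M σ := by
  obtain ⟨c, hc, hcσ⟩ := hσ
  calc 0 < c • bornRule M ρ := smul_pos hc hρ
    _ = bornRule M (c • ρ) := (map_smul _ _ _).symm
    _ ≤ bornRule M σ := bornRule_mono hM hcσ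

/-- The term of the POVM element `M` in the supremum defining `D(ρ‖σ)`. -/
noncomputable def effectDiv (M ρ σ : Matrix n n ℂ) : ℝ :=
  bornRule M ρ * Real.logb 2 (bornRule M ρ / bornRule M σ)

theorem convexOn_effectDiv (hM : 0 ≤ M) (hρ : 0 ≤ ρ) :
    ConvexOn ℝ (dominators ρ) (effectDiv M ρ) := by
  rcases (bornRule_nonneg hM hρ).eq_or_lt with h | h
  · have hzero : effectDiv M ρ = fun _ ↦ 0 := funext fun σ ↦ by simp [effectDiv, ← h]
    exact hzero ▸ convexOn_const 0 (convex_dominators ρ)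
  · exact ((convexOn_mul_logb_div one_lt_two h.le).comp_linearMap (bornRule M)).subset
      (fun _ ↦ bornRule_pos_of_mem_dominators hM h) (convex_dominators ρ)

theorem continuousOn_effectDiv (hM : 0 ≤ M) (hρ : 0 ≤ ρ) :
    ContinuousOn (effectDiv M ρ) (dominators ρ) := by
  rcases (bornRule_nonneg hM hρ).eq_or_lt with h | h
  · have hzero : effectDiv M ρ = fun _ ↦ 0 := funext fun σ ↦ by simp [effectDiv, ← h]
    exact hzero ▸ continuousOn_const
  · exact continuousOn_mul_logb_div.comp
      (bornRule M).continuous_of_finiteDimensional.continuousOn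
      fun _ ↦ bornRule_pos_of_mem_dominators hM h

theorem bddAbove_range_effectDiv [DecidableEq n] (hρ : 0 ≤ ρ) (hσ : σ ∈ dominators ρ) :
    BddAbove (Set.range fun M : Set.Icc (0 : Matrix n n ℂ) 1 ↦ effectDiv M.1 ρ σ) := by
  obtain ⟨c, hc, hcσ⟩ := hσ
  refine ⟨ρ.trace.re * |Real.logb 2 c⁻¹|, ?_⟩
  rintro _ ⟨⟨M, hM₀, hM₁⟩, rfl⟩
  have hp := bornRule_nonneg hM₀ hρ
  have hs : c * bornRule M ρ ≤ bornRule M σ := by simpa using bornRule_mono hM₀ hcσ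
  calc effectDiv M ρ σ ≤ bornRule M ρ * Real.logb 2 c⁻¹ := mul_logb_div_le one_lt_two hp hc hs
    _ ≤ bornRule M ρ * |Real.logb 2 c⁻¹| := by gcongr; exact le_abs_self _
    _ ≤ ρ.trace.re * |Real.logb 2 c⁻¹| := by gcongr; exact bornRule_le_re_trace hM₁ hρ

end Matrix

section ObsDiv

open scoped MatrixOrder

variable {d : ℕ} {ρ : Matrix (Fin d) (Fin d) ℂ}

theorem obsDiv_eq_iSup_effectDiv (ρ σ : Matrix (Fin d) (Fin d) ℂ) :
    obsDiv ρ σ = ⨆ M : Set.Icc (0 : Matrix (Fin d) (Fin d) ℂ) 1, effectDiv M.1 ρ σ := by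
  refine congrArg sSup (Set.ext fun v ↦ ?_)
  simp [Matrix.le_iff, effectDiv, bornRule, and_assoc, eq_comm]

theorem convexOn_obsDiv (hρ : 0 ≤ ρ) : ConvexOn ℝ (dominators ρ) (obsDiv ρ) := by
  have : Nonempty (Set.Icc (0 : Matrix (Fin d) (Fin d) ℂ) 1) := ⟨⟨0, le_rfl, zero_le_one⟩⟩
  rw [funext (obsDiv_eq_iSup_effectDiv ρ)]
  exact convexOn_ciSup (fun _ ↦ bddAbove_range_effectDiv hρ) fun M ↦ convexOn_effectDiv M.2.1 hρ

theorem lowerSemicontinuousOn_obsDiv (hρ : 0 ≤ ρ) :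
    LowerSemicontinuousOn (obsDiv ρ) (dominators ρ) := by
  rw [funext (obsDiv_eq_iSup_effectDiv ρ)]
  exact lowerSemicontinuousOn_ciSup (fun _ ↦ bddAbove_range_effectDiv hρ) fun M ↦
    (continuousOn_effectDiv M.2.1 hρ).lowerSemicontinuousOn

theorem max_divergence_information_general {X : Type*} [Fintype X] [Nonempty X]
    {ρ : X → Matrix (Fin d) (Fin d) ℂ} (hρ : ∀ x, (ρ x).PosSemidef)
    (hdom : ∀ x y, ρ y ∈ dominators (ρ x)) {b : ℝ}
    (hmax : ∀ q : X → ℝ, (∀ x, 0 ≤ q x) → ∑ x, q x = 1 →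
      ∑ x, q x * obsDiv (ρ x) (∑ y, (q y : ℂ) • ρ y) ≤ b) :
    ∃ q : X → ℝ, (∀ x, 0 ≤ q x) ∧ ∑ x, q x = 1 ∧
      ∀ x, obsDiv (ρ x) (∑ y, (q y : ℂ) • ρ y) ≤ b := by
  let mixture : (X → ℝ) →ₗ[ℝ] Matrix (Fin d) (Fin d) ℂ := Fintype.linearCombination ℝ ρ
  have mixture_apply (q : X → ℝ) : ∑ y, (q y : ℂ) • ρ y = mixture q := by
    simp [mixture, Fintype.linearCombination_apply]
  simp only [mixture_apply] at hmax ⊢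
  have hconvex : Convex ℝ (mixture '' stdSimplex ℝ X) :=
    (convex_stdSimplex ℝ X).linear_image mixture
  have hcompact : IsCompact (mixture '' stdSimplex ℝ X) :=
    (isCompact_stdSimplex ℝ X).image mixture.continuous_of_finiteDimensional
  have hsubset (x : X) : mixture '' stdSimplex ℝ X ⊆ dominators (ρ x) := by
    rintro _ ⟨q, hq, rfl⟩
    exact (convex_dominators (ρ x)).sum_mem (fun y _ ↦ hq.1 y) hq.2 fun y _ ↦ hdom x y
  obtain ⟨_, ⟨q, hq, rfl⟩, hle⟩ := exists_forall_le_of_forall_exists_sum_smul_le hcompact hconvex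
    (fun x ↦ (convexOn_obsDiv (hρ x).nonneg).subset (hsubset x) hconvex)
    (fun x ↦ (lowerSemicontinuousOn_obsDiv (hρ x).nonneg).mono (hsubset x))
    fun q hq ↦ ⟨mixture q, Set.mem_image_of_mem _ hq, hmax q hq.1 hq.2⟩
  exact ⟨q, hq.1, hq.2, hle⟩

end ObsDiv

/-- If the maximum possible divergence information of an encoding `x ↦ ρ_x` is
at most `b`, then there is a single distribution `q` such that with
`ρ = Σ_y q(y)·ρ_y` one has `D(ρ_x‖ρ) ≤ b` for every `x`. -/
theorem max_divergence_information (X : Type*) [Fintype X] [Nonempty X]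
    (d : ℕ) (hd : 0 < d)
    (ρ : X → Matrix (Fin d) (Fin d) ℂ)
    (hρ_pd : ∀ x, (ρ x).PosDef) (hρ_tr : ∀ x, (ρ x).trace = 1)
    (b : ℝ) (hb : 0 ≤ b)
    (hmax : ∀ q : X → ℝ, (∀ x, 0 ≤ q x) → ∑ x, q x = 1 →
      ∑ x, q x * obsDiv (ρ x) (∑ y, (q y : ℂ) • ρ y) ≤ b) :
    ∃ q : X → ℝ, (∀ x, 0 ≤ q x) ∧ ∑ x, q x = 1 ∧
      ∀ x, obsDiv (ρ x) (∑ y, (q y : ℂ) • ρ y) ≤ b := by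
  exact max_divergence_information_general (fun x ↦ (hρ_pd x).posSemidef)
    (fun x y ↦ mem_dominators_of_posDef (hρ_pd x).isHermitian (hρ_pd y)) hmax
end

section
/- (Helstrom bound.) Let ρ and σ be density matrices on ℂ^d, and let M be any POVM element on ℂ^d (a d×d complex matrix such that both M and I−M are positive semidefinite). Then the success probability of the corresponding strategy for identifying which of the two equiprobable states was given satisfies (1/2)·Re(Tr(Mρ)) + (1/2)·Re(Tr((I−M)σ)) ≤ 1/2 + (1/4)·‖ρ−σ‖₁; equivalently, Re(Tr(Mρ)) − Re(Tr(Mσ)) ≤ (1/2)·‖ρ−σ‖₁. -/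
open scoped ComplexOrder

/-!
For Hermitian `A`, writing `Tr(MA)` in an eigenbasis of `A` gives `∑ i, tᵢ λᵢ`, where the `λᵢ` are
the eigenvalues and the weights `tᵢ` are the diagonal entries of `M` in that basis. If `0 ≤ M ≤ 1`,
then `0 ≤ tᵢ ≤ 1`, so the sum is at most the sum of the positive parts of the `λᵢ`, which is
`(Tr A + ‖A‖₁) / 2`. The Helstrom bound is the case `A = ρ - σ`.
-/

open Matrix

theorem mul_le_posPart_of_mem_Icc {R : Type*} [Ring R] [Lattice R] [IsOrderedRing R] {t : R}
    (ht : t ∈ Set.Icc 0 1) (x : R) : t * x ≤ x⁺ :=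
  calc
    t * x ≤ t * x⁺ := mul_le_mul_of_nonneg_left (le_posPart x) ht.1
    _ ≤ x⁺ := mul_le_of_le_one_left (posPart_nonneg x) ht.2

theorem diag_conjTranspose_mul_mul_mem_Icc {R m n : Type*} [Ring R] [PartialOrder R] [StarRing R]
    [AddRightMono R] [Finite m] [Fintype n] [DecidableEq m] [DecidableEq n] {M : Matrix n n R}
    (hM : M.PosSemidef) (hM' : (1 - M).PosSemidef) {V : Matrix n m R} (hV : Vᴴ * V = 1) (i : m) :
    (Vᴴ * M * V) i i ∈ Set.Icc 0 1 := by
  have compl_conj : Vᴴ * (1 - M) * V = 1 - Vᴴ * M * V := by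
    rw [Matrix.mul_sub, Matrix.sub_mul, Matrix.mul_one, hV]
  have compl_nonneg : 0 ≤ (1 - Vᴴ * M * V : Matrix m m R) i i :=
    compl_conj ▸ (hM'.conjTranspose_mul_mul_same V).diag_nonneg
  rw [Matrix.sub_apply, Matrix.one_apply_eq, sub_nonneg] at compl_nonneg
  exact ⟨(hM.conjTranspose_mul_mul_same V).diag_nonneg, compl_nonneg⟩

section RCLike

variable {𝕜 n : Type*} [RCLike 𝕜] [Fintype n] [DecidableEq n] {A M : Matrix n n 𝕜}

theorem trace_mul_eq_sum_diag_mul_eigenvalues (hA : A.IsHermitian) (M : Matrix n n 𝕜) :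
    (M * A).trace = ∑ i, ((hA.eigenvectorUnitary : Matrix n n 𝕜)ᴴ * M * hA.eigenvectorUnitary) i i *
      (hA.eigenvalues i : 𝕜) := by
  conv_lhs => rw [hA.spectral_theorem, Unitary.conjStarAlgAut_apply, ← mul_assoc,
    trace_mul_comm, ← mul_assoc, ← mul_assoc]
  simp only [trace, diag_apply, mul_diagonal, Function.comp_apply, star_eq_conjTranspose]

theorem re_trace_eq_sum_eigenvalues (hA : A.IsHermitian) :
    RCLike.re A.trace = ∑ i, hA.eigenvalues i := by
  rw [hA.trace_eq_sum_eigenvalues, map_sum]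
  simp only [RCLike.ofReal_re]

theorem re_trace_mul_le_sum_posPart_eigenvalues (hM : M.PosSemidef) (hM' : (1 - M).PosSemidef)
    (hA : A.IsHermitian) : RCLike.re (M * A).trace ≤ ∑ i, (hA.eigenvalues i)⁺ := by
  rw [trace_mul_eq_sum_diag_mul_eigenvalues hA, map_sum]
  gcongr with i
  rw [RCLike.re_mul_ofReal]
  refine mul_le_posPart_of_mem_Icc ?_ _
  have weight_mem := diag_conjTranspose_mul_mul_mem_Icc hM hM'
    (Unitary.coe_star_mul_self hA.eigenvectorUnitary) i
  simpa only [RCLike.zero_re, RCLike.one_re] using RCLike.re_monotone.mapsTo_Icc weight_mem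

theorem sum_posPart_eigenvalues_eq (hA : A.IsHermitian) :
    ∑ i, (hA.eigenvalues i)⁺ = (1 / 2) * (RCLike.re A.trace + ∑ i, |hA.eigenvalues i|) := by
  rw [re_trace_eq_sum_eigenvalues hA, ← Finset.sum_add_distrib]
  simp only [add_abs_eq_two_nsmul_posPart, nsmul_eq_mul, ← Finset.mul_sum]
  rw [Nat.cast_ofNat, one_div, inv_mul_cancel_left₀ two_ne_zero]

/-- Unequal priors `p`, `q` are covered by taking `p • ρ` and `q • σ` for `ρ` and `σ`. -/
theorem helstrom_bound_general {ρ σ : Matrix n n 𝕜} (hM : M.PosSemidef)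
    (hM' : (1 - M).PosSemidef) (hH : (ρ - σ).IsHermitian) :
    RCLike.re (M * ρ).trace + RCLike.re ((1 - M) * σ).trace ≤
        (1 / 2) * (RCLike.re ρ.trace + RCLike.re σ.trace + ∑ i, |hH.eigenvalues i|) ∧
      RCLike.re (M * ρ).trace - RCLike.re (M * σ).trace ≤
        (1 / 2) * (RCLike.re ρ.trace - RCLike.re σ.trace + ∑ i, |hH.eigenvalues i|) := by
  have bias_le := re_trace_mul_le_sum_posPart_eigenvalues hM hM' hH
  rw [sum_posPart_eigenvalues_eq, mul_sub, trace_sub, trace_sub, map_sub, map_sub] at bias_le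
  refine ⟨?_, bias_le⟩
  rw [sub_mul, one_mul, trace_sub, map_sub]
  linarith

end RCLike

/-- **Helstrom bound**: for any POVM element `M`, the success probability of
distinguishing two equiprobable states `ρ`, `σ` is at most
`1/2 + (1/4)·‖ρ−σ‖₁`; equivalently `Re Tr(Mρ) − Re Tr(Mσ) ≤ (1/2)·‖ρ−σ‖₁`,
where `‖·‖₁` is the sum of absolute values of the eigenvalues. -/
theorem helstrom_bound (d : ℕ) (ρ σ : Matrix (Fin d) (Fin d) ℂ)
    (hρ : ρ.PosSemidef) (hρtr : ρ.trace = 1)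
    (hσ : σ.PosSemidef) (hσtr : σ.trace = 1)
    (M : Matrix (Fin d) (Fin d) ℂ) (hM : M.PosSemidef) (hM' : (1 - M).PosSemidef)
    (hH : (ρ - σ).IsHermitian) :
    (1 / 2) * (M * ρ).trace.re + (1 / 2) * ((1 - M) * σ).trace.re ≤
        1 / 2 + (1 / 4) * ∑ i, |hH.eigenvalues i| ∧
      (M * ρ).trace.re - (M * σ).trace.re ≤ (1 / 2) * ∑ i, |hH.eigenvalues i| := by
  have h := helstrom_bound_general hM hM' hH
  simp only [hρtr, hσtr, RCLike.re_to_complex, Complex.one_re] at h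
  exact ⟨by linarith, by linarith⟩
end

section
/- Let n ≥ 1 and let N = 2^n. For each x in a set X of size N, let P_x be a probability distribution on X (P_x(y) ≥ 0, Σ_y P_x(y) = 1), and let P̄ := Σ_x 2^{−n}·P_x be the uniform average; assume P̄(y) > 0 for all y. Then the ξ-information of the uniform ensemble {2^{−n}, P_x} is at least its Holevo-χ information: n + log₂( Σ_{x} Σ_{y} (2^{−n}·P_x(y))² / P̄(y) ) ≥ 2^{−n}·Σ_{x} Σ_{y} P_x(y)·log₂( P_x(y) / P̄(y) ), where terms with P_x(y) = 0 on the right-hand side contribute 0. -/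
/-!
If `(x, y)` is drawn by choosing `x` uniformly and then `y` from `P_x`, the Holevo information is
the mean of `log (P_x y / P̄ y)`, and the `ξ`-information is the logarithm of the mean of
`P_x y / P̄ y`. Concavity of the logarithm compares the two.
-/

open Finset

section Jensen

variable {ι : Type*} {s : Finset ι} {b : ℝ} {w z : ι → ℝ}

theorem sum_mul_log_le_log_sum_mul (hw : ∀ i ∈ s, 0 ≤ w i) (hw_sum : ∑ i ∈ s, w i = 1)
    (hz : ∀ i ∈ s, w i ≠ 0 → 0 < z i) :
    ∑ i ∈ s, w i * Real.log (z i) ≤ Real.log (∑ i ∈ s, w i * z i) := by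
  classical
  have restrict (f : ι → ℝ) : ∑ i ∈ s with w i ≠ 0, w i * f i = ∑ i ∈ s, w i * f i :=
    sum_filter_of_ne fun _ _ => left_ne_zero_of_mul
  rw [← restrict, ← restrict]
  refine strictConcaveOn_log_Ioi.concaveOn.le_map_sum (fun i hi => hw i (mem_filter.mp hi).1) ?_
    fun i hi => hz i (mem_filter.mp hi).1 (mem_filter.mp hi).2
  rwa [sum_filter_ne_zero]

theorem sum_mul_logb_le_logb_sum_mul (hb : 1 < b) (hw : ∀ i ∈ s, 0 ≤ w i)
    (hw_sum : ∑ i ∈ s, w i = 1) (hz : ∀ i ∈ s, w i ≠ 0 → 0 < z i) :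
    ∑ i ∈ s, w i * Real.logb b (z i) ≤ Real.logb b (∑ i ∈ s, w i * z i) := by
  simp only [Real.logb, ← mul_div_assoc, ← sum_div]
  exact div_le_div_of_nonneg_right (sum_mul_log_le_log_sum_mul hw hw_sum hz) (Real.log_pos hb).le

end Jensen

section Divergence

variable {ι : Type*} {s : Finset ι}

theorem sum_sq_div_pos {K : Type*} [Field K] [LinearOrder K] [IsStrictOrderedRing K] {p q : ι → K}
    (hp : ∃ i ∈ s, p i ≠ 0) (hpq : ∀ i ∈ s, p i ≠ 0 → 0 < q i) :
    0 < ∑ i ∈ s, p i ^ 2 / q i := by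
  have term_pos {i : ι} (hi : i ∈ s) (hpi : p i ≠ 0) : 0 < p i ^ 2 / q i :=
    div_pos (sq_pos_of_ne_zero hpi) (hpq i hi hpi)
  obtain ⟨i, hi, hpi⟩ := hp
  refine sum_pos' (fun j hj => ?_) ⟨i, hi, term_pos hi hpi⟩
  rcases eq_or_ne (p j) 0 with hpj | hpj
  · simp [hpj]
  · exact (term_pos hj hpj).le

variable {b : ℝ} {p q : ι → ℝ}

/-- The left side is the relative entropy of `p` with respect to `q`, the right side their Rényi
divergence of order two. -/
theorem sum_mul_logb_div_le_logb_sum_sq_div (hb : 1 < b) (hp : ∀ i ∈ s, 0 ≤ p i)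
    (hp_sum : ∑ i ∈ s, p i = 1) (hpq : ∀ i ∈ s, p i ≠ 0 → 0 < q i) :
    ∑ i ∈ s, p i * Real.logb b (p i / q i) ≤ Real.logb b (∑ i ∈ s, p i ^ 2 / q i) := by
  have ratio_pos : ∀ i ∈ s, p i ≠ 0 → 0 < p i / q i := fun i hi hpi =>
    div_pos ((hp i hi).lt_of_ne' hpi) (hpq i hi hpi)
  simpa only [sq, mul_div_assoc] using sum_mul_logb_le_logb_sum_mul hb hp hp_sum ratio_pos

end Divergence

theorem xi_ge_chi_classical_general {X Y : Type*} [Fintype X] [Nonempty X] [Fintype Y]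
    {b : ℝ} (hb : 1 < b) {P : X → Y → ℝ} (hP_nonneg : ∀ x y, 0 ≤ P x y)
    (hP_sum : ∀ x, ∑ y, P x y = 1) {Q : Y → ℝ} (hPQ : ∀ x y, P x y ≠ 0 → 0 < Q y) :
    (Fintype.card X : ℝ)⁻¹ * ∑ x, ∑ y, P x y * Real.logb b (P x y / Q y) ≤
      Real.logb b (Fintype.card X) +
        Real.logb b (∑ x, ∑ y, ((Fintype.card X : ℝ)⁻¹ * P x y) ^ 2 / Q y) := by
  set N : ℝ := (Fintype.card X : ℝ)
  have hN : 0 < N := Nat.cast_pos.mpr Fintype.card_pos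
  let joint : X × Y → ℝ := fun z => N⁻¹ * P z.1 z.2
  let reference : X × Y → ℝ := fun z => N⁻¹ * Q z.2
  have joint_nonneg : ∀ z ∈ univ, 0 ≤ joint z := fun z _ =>
    mul_nonneg (inv_nonneg.mpr hN.le) (hP_nonneg z.1 z.2)
  have joint_sum : ∑ z, joint z = 1 := by
    simp [joint, Fintype.sum_prod_type, ← mul_sum, hP_sum, N]
  have Q_pos : ∀ z ∈ univ, joint z ≠ 0 → 0 < Q z.2 := fun z _ hz =>
    hPQ z.1 z.2 (right_ne_zero_of_mul hz)
  have reference_pos : ∀ z ∈ univ, joint z ≠ 0 → 0 < reference z := fun z hz hjz =>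
    mul_pos (inv_pos.mpr hN) (Q_pos z hz hjz)
  have moment_pos : 0 < ∑ z, joint z ^ 2 / Q z.2 :=
    sum_sq_div_pos (exists_ne_zero_of_sum_ne_zero (joint_sum ▸ one_ne_zero)) Q_pos
  calc N⁻¹ * ∑ x, ∑ y, P x y * Real.logb b (P x y / Q y)
      = ∑ z, joint z * Real.logb b (joint z / reference z) := by
        simp only [joint, reference, Fintype.sum_prod_type, mul_sum, mul_assoc,
          mul_div_mul_left _ _ (inv_ne_zero hN.ne')]
    _ ≤ Real.logb b (∑ z, joint z ^ 2 / reference z) :=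
        sum_mul_logb_div_le_logb_sum_sq_div hb joint_nonneg joint_sum reference_pos
    _ = Real.logb b (N * ∑ z, joint z ^ 2 / Q z.2) := by
        congr 1
        simp only [reference, mul_sum, ← div_div, div_inv_eq_mul]
        exact sum_congr rfl fun z _ => by ring
    _ = Real.logb b N + Real.logb b (∑ x, ∑ y, (N⁻¹ * P x y) ^ 2 / Q y) := by
        rw [Real.logb_mul hN.ne' moment_pos.ne', Fintype.sum_prod_type]

/-- Classical (commuting) case of `ξ(E) ≥ χ(E)`: for a uniform ensemble of
probability distributions `P_x` on a set of size `2^n` with average `P̄`,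
the ξ-information is at least the Holevo-χ information. -/
theorem xi_ge_chi_classical (n : ℕ) (hn : 1 ≤ n)
    (X : Type*) [Fintype X] (hX : Fintype.card X = 2 ^ n)
    (P : X → X → ℝ)
    (hP_nonneg : ∀ x y, 0 ≤ P x y) (hP_sum : ∀ x, ∑ y, P x y = 1)
    (Pbar : X → ℝ) (hPbar : ∀ y, Pbar y = ∑ x, ((2 : ℝ) ^ n)⁻¹ * P x y)
    (hPbar_pos : ∀ y, 0 < Pbar y) :
    (n : ℝ) + Real.logb 2 (∑ x, ∑ y, (((2 : ℝ) ^ n)⁻¹ * P x y) ^ 2 / Pbar y) ≥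
      ((2 : ℝ) ^ n)⁻¹ * ∑ x, ∑ y, P x y * Real.logb 2 (P x y / Pbar y) := by
  have : Nonempty X := Fintype.card_pos_iff.mp (by simp [hX])
  simpa [hX, Real.logb_pow] using
    xi_ge_chi_classical_general one_lt_two hP_nonneg hP_sum fun _ y _ => hPbar_pos y
end

section
/- Let n ≥ 1 be an integer, let 0 < ε < 1 be real, and set δ = 2^{−εn/2} and N = 2^n. For each x in a set X of size N define the probability distribution P_x on X by P_x(x) = δ and P_x(y) = (1−δ)/(N−1) for y ≠ x; then the uniform average P̄ := Σ_x 2^{−n}·P_x is the uniform distribution on X, and the ξ-information of the uniform ensemble {2^{−n}, P_x} satisfies n + log₂( Σ_{x} Σ_{y} (2^{−n}·P_x(y))² / P̄(y) ) ≥ n·(1−ε). -/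
/-!
The sum inside the logarithm of the ξ-information is the probability of guessing the index of a
sample by drawing from the posterior. If every `P_x` has an outcome of mass at least `δ` while no
outcome has average mass above `c`, keeping only that outcome in each inner sum bounds the guessing
probability below by `δ² / (c · card ι)`. In the separating ensemble `c = 2⁻ⁿ` and `δ² = 2^(-εn)`.
-/

section UniformEnsemble

variable {ι X : Type*} [Fintype ι]

/-- The average `P̄` of the family `P` under the uniform prior on `ι`. Each `P i` is given by its
real point masses; it is not required to be a probability distribution. -/
noncomputable def uniformAverage (P : ι → X → ℝ) (y : X) : ℝ :=
  ∑ i, (Fintype.card ι : ℝ)⁻¹ * P i y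

/-- The success probability of guessing a uniformly distributed index `i` from one sample of `P i`
by drawing from the posterior distribution of `i`; this is the classical pretty good measurement. -/
noncomputable def posteriorGuessProb [Fintype X] (P : ι → X → ℝ) : ℝ :=
  ∑ i, ∑ y, ((Fintype.card ι : ℝ)⁻¹ * P i y) ^ 2 / uniformAverage P y

/-- The ξ-information, in bits, of the ensemble `P` with uniform weights; the prior entropy, called
`n` for an ensemble of size `2 ^ n`, is `logb 2 (card ι)`. -/
noncomputable def xiInformation [Fintype X] (P : ι → X → ℝ) : ℝ :=
  Real.logb 2 (Fintype.card ι) + Real.logb 2 (posteriorGuessProb P)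

variable [Fintype X] {P : ι → X → ℝ} {f : ι → X} {c δ : ℝ}

theorem sq_div_card_le_posteriorGuessProb (hδ : 0 ≤ δ) (hpos : ∀ y, 0 < uniformAverage P y)
    (hc : ∀ y, uniformAverage P y ≤ c) (hf : ∀ i, δ ≤ P i (f i)) :
    δ ^ 2 / (c * Fintype.card ι) ≤ posteriorGuessProb P :=
  calc δ ^ 2 / (c * Fintype.card ι)
      = ∑ _i : ι, ((Fintype.card ι : ℝ)⁻¹ * δ) ^ 2 / c := by
        rw [Finset.sum_const, Finset.card_univ, nsmul_eq_mul]
        field_simp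
    _ ≤ ∑ i, ((Fintype.card ι : ℝ)⁻¹ * P i (f i)) ^ 2 / uniformAverage P (f i) := by
        gcongr with i
        · exact hpos (f i)
        · exact hf i
        · exact hc (f i)
    _ ≤ posteriorGuessProb P := Finset.sum_le_sum fun i _ =>
        Finset.single_le_sum (f := fun y => ((Fintype.card ι : ℝ)⁻¹ * P i y) ^ 2 /
          uniformAverage P y) (fun y _ => div_nonneg (sq_nonneg _) (hpos y).le)
          (Finset.mem_univ (f i))

theorem two_mul_logb_sub_logb_le_xiInformation [Nonempty ι] (hδ : 0 < δ)
    (hpos : ∀ y, 0 < uniformAverage P y) (hc : ∀ y, uniformAverage P y ≤ c)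
    (hf : ∀ i, δ ≤ P i (f i)) :
    2 * Real.logb 2 δ - Real.logb 2 c ≤ xiInformation P := by
  obtain ⟨i⟩ := ‹Nonempty ι›
  have hc0 : 0 < c := (hpos (f i)).trans_le (hc (f i))
  have hcard : (0 : ℝ) < Fintype.card ι := Nat.cast_pos.2 (Fintype.card_pos_iff.2 ⟨i⟩)
  have hlog : Real.logb 2 (δ ^ 2 / (c * Fintype.card ι)) =
      2 * Real.logb 2 δ - (Real.logb 2 c + Real.logb 2 (Fintype.card ι)) := by
    rw [Real.logb_div (by positivity) (by positivity), Real.logb_mul hc0.ne' hcard.ne',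
      Real.logb_pow, Nat.cast_ofNat]
  have hle := Real.logb_le_logb_of_le one_lt_two (by positivity)
    (sq_div_card_le_posteriorGuessProb hδ.le hpos hc hf)
  rw [xiInformation]
  linarith

end UniformEnsemble

section Spiked

variable {X : Type*} [Fintype X] [DecidableEq X]

/-- The distribution on `X` with mass `δ` at `x` and the remaining mass `1 - δ` spread evenly over
the other points. The value `δ` is an arbitrary real, and on a one-point `X`, where the denominator
vanishes, the total mass is `δ`. -/
noncomputable def spiked (δ : ℝ) (x y : X) : ℝ :=
  if y = x then δ else (1 - δ) / ((Fintype.card X : ℝ) - 1)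

theorem spiked_self (δ : ℝ) (x : X) : spiked δ x x = δ :=
  if_pos rfl

variable [Nontrivial X]

theorem sum_spiked_left (δ : ℝ) (y : X) : ∑ x, spiked δ x y = 1 := by
  have hcard : (Fintype.card X : ℝ) - 1 ≠ 0 :=
    sub_ne_zero.2 (Nat.cast_ne_one.2 Fintype.one_lt_card.ne')
  have hoff : ∀ x ∈ Finset.univ.erase y,
      spiked δ x y = (1 - δ) / ((Fintype.card X : ℝ) - 1) :=
    fun x hx => if_neg (Finset.ne_of_mem_erase hx).symm
  rw [← Finset.add_sum_erase _ _ (Finset.mem_univ y), spiked_self, Finset.sum_congr rfl hoff,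
    Finset.sum_const, Finset.card_erase_of_mem (Finset.mem_univ y), Finset.card_univ, nsmul_eq_mul,
    Nat.cast_pred Fintype.card_pos, mul_div_cancel₀ _ hcard, add_sub_cancel]

theorem uniformAverage_spiked (δ : ℝ) (y : X) :
    uniformAverage (spiked δ) y = (Fintype.card X : ℝ)⁻¹ := by
  rw [uniformAverage, ← Finset.mul_sum, sum_spiked_left, mul_one]

theorem xi_separation_lower_bound_general {δ : ℝ} (hδ : 0 < δ) :
    (∀ y : X, uniformAverage (spiked δ) y = (Fintype.card X : ℝ)⁻¹) ∧
      Real.logb 2 (Fintype.card X) + 2 * Real.logb 2 δ ≤ xiInformation (spiked (X := X) δ) := by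
  refine ⟨uniformAverage_spiked δ, ?_⟩
  have hpos (y : X) : 0 < uniformAverage (spiked δ) y := by
    rw [uniformAverage_spiked]
    exact inv_pos.2 (Nat.cast_pos.2 Fintype.card_pos)
  have hle := two_mul_logb_sub_logb_le_xiInformation hδ hpos
    (fun y => (uniformAverage_spiked δ y).le) (fun x => (spiked_self δ x).ge)
  rwa [Real.logb_inv, sub_neg_eq_add, add_comm] at hle

end Spiked

/-- Lower bound half of the exponential separation between ξ-information and
Holevo-χ information: for the ensemble `P_x(x) = 2^(−εn/2)`,
`P_x(y) = (1−2^(−εn/2))/(2^n−1)` for `y ≠ x`, the average `P̄` is uniform and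
the ξ-information is at least `n(1−ε)`. -/
theorem xi_separation_lower_bound (n : ℕ) (hn : 1 ≤ n)
    (ε : ℝ) (hε0 : 0 < ε) (hε1 : ε < 1)
    (δ : ℝ) (hδ : δ = (2 : ℝ) ^ (-(ε * n / 2)))
    (X : Type*) [Fintype X] [DecidableEq X] (hX : Fintype.card X = 2 ^ n)
    (P : X → X → ℝ)
    (hP : ∀ x y, P x y = if y = x then δ else (1 - δ) / ((2 : ℝ) ^ n - 1))
    (Pbar : X → ℝ) (hPbar : ∀ y, Pbar y = ∑ x, ((2 : ℝ) ^ n)⁻¹ * P x y) :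
    (∀ y, Pbar y = ((2 : ℝ) ^ n)⁻¹) ∧
      (n : ℝ) + Real.logb 2 (∑ x, ∑ y, (((2 : ℝ) ^ n)⁻¹ * P x y) ^ 2 / Pbar y) ≥
        (n : ℝ) * (1 - ε) := by
  have : Nontrivial X := Fintype.one_lt_card_iff_nontrivial.1 (hX ▸ Nat.one_lt_two_pow (by omega))
  have hcard : (Fintype.card X : ℝ) = 2 ^ n := by exact_mod_cast hX
  obtain rfl : P = spiked δ := by ext x y; rw [hP, spiked, hcard]
  obtain rfl : Pbar = uniformAverage (spiked δ) := by ext y; rw [hPbar, uniformAverage, hcard]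
  obtain ⟨havg, hxi⟩ := xi_separation_lower_bound_general (X := X) (hδ ▸ by positivity : 0 < δ)
  have hlogδ : Real.logb 2 δ = -(ε * n / 2) := by rw [hδ, Real.logb_rpow two_pos (by norm_num)]
  have hlogN : Real.logb 2 ((2 : ℝ) ^ n) = n := by
    rw [Real.logb_pow, Real.logb_self_eq_one one_lt_two, mul_one]
  rw [xiInformation, posteriorGuessProb, hcard, hlogN, hlogδ] at hxi
  exact ⟨fun y => hcard ▸ havg y, by linarith⟩
end

section
/- Let n ≥ 1 be an integer, let 0 < ε < 1 be real, and set δ = 2^{−εn/2} and N = 2^n. For each x in a set X of size N define the probability distribution P_x on X by P_x(x) = δ and P_x(y) = (1−δ)/(N−1) for y ≠ x; then the uniform average P̄ := Σ_x 2^{−n}·P_x is the uniform distribution on X, and the Holevo-χ information of the uniform ensemble {2^{−n}, P_x} satisfies 2^{−n}·Σ_{x} Σ_{y} P_x(y)·log₂( P_x(y) / P̄(y) ) ≤ 2^{−εn/2}·n·(1−ε/2), where terms with P_x(y) = 0 contribute 0. -/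
/-!
By symmetry `χ` is the relative entropy of a single `P_x` with respect to the uniform distribution
on `N = 2 ^ n` points, namely `δ log₂ (N δ) + (1 - δ) log₂ (N (1 - δ) / (N - 1))`. Since `N δ ≥ 1`,
the mass off the spike is spread more thinly than in the uniform distribution, so the second term
is nonpositive; the first one is `δ n (1 - ε / 2)` because `N δ = 2 ^ (n (1 - ε / 2))`.
-/

open Finset Real

/-- The average `∑ i, p i • P i` of an ensemble, given by its weights `p` and distributions `P`. -/
def ensembleAverage {ι Y : Type*} [Fintype ι] (p : ι → ℝ) (P : ι → Y → ℝ) (y : Y) : ℝ :=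
  ∑ i, p i * P i y

/-- The Holevo-χ information, in bits, of a classical ensemble: the mean relative entropy of its
members with respect to their average. Terms with `P i y = 0` vanish because of the factor `P i y`,
whatever the junk value of the logarithm. -/
noncomputable def holevoChi {ι Y : Type*} [Fintype ι] [Fintype Y]
    (p : ι → ℝ) (P : ι → Y → ℝ) : ℝ :=
  ∑ i, p i * ∑ y, P i y * logb 2 (P i y / ensembleAverage p P y)

/-- The distribution `P_x` with mass `δ` at `x` and the remaining mass `1 - δ` spread evenly over
the other points. On a one-point type the mass `1 - δ` is lost. -/
noncomputable def spikedDist {X : Type*} [Fintype X] [DecidableEq X] (δ : ℝ) (x y : X) : ℝ :=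
  if y = x then δ else (1 - δ) / (Fintype.card X - 1)

lemma card_sub_one_pos (X : Type*) [Fintype X] [Nontrivial X] :
    (0 : ℝ) < Fintype.card X - 1 :=
  sub_pos.mpr (mod_cast Fintype.one_lt_card)

section SpikedDist

variable {X : Type*} [Fintype X] [DecidableEq X]

lemma spikedDist_comm (δ : ℝ) (x y : X) : spikedDist δ x y = spikedDist δ y x := by
  simp only [spikedDist, eq_comm]

lemma sum_comp_spikedDist (f : ℝ → ℝ) (δ : ℝ) (x : X) :
    ∑ y, f (spikedDist δ x y) =
      f δ + (Fintype.card X - 1) * f ((1 - δ) / (Fintype.card X - 1)) := by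
  have off_spike : ∀ y ∈ univ.erase x,
      f (spikedDist δ x y) = f ((1 - δ) / (Fintype.card X - 1)) := fun y hy ↦ by
    rw [spikedDist, if_neg (ne_of_mem_erase hy)]
  rw [← add_sum_erase univ _ (mem_univ x), sum_congr rfl off_spike, sum_const, nsmul_eq_mul,
    cast_card_erase_of_mem (mem_univ x), card_univ, spikedDist, if_pos rfl]

variable [Nontrivial X]

lemma sum_spikedDist (δ : ℝ) (x : X) : ∑ y, spikedDist δ x y = 1 := by
  have hN := (card_sub_one_pos X).ne'
  rw [sum_comp_spikedDist (fun t ↦ t), mul_div_cancel₀ _ hN, add_sub_cancel]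

lemma ensembleAverage_const_spikedDist (c δ : ℝ) (y : X) :
    ensembleAverage (fun _ ↦ c) (spikedDist δ) y = c := by
  simp only [ensembleAverage, spikedDist_comm δ _ y, ← mul_sum, sum_spikedDist, mul_one]

lemma holevoChi_uniform_spikedDist (δ : ℝ) :
    holevoChi (fun _ : X ↦ (Fintype.card X : ℝ)⁻¹) (spikedDist δ) =
      δ * logb 2 (δ * Fintype.card X) +
        (1 - δ) * logb 2 ((1 - δ) / (Fintype.card X - 1) * Fintype.card X) := by
  have hN := (card_sub_one_pos X).ne'
  have hcard : (Fintype.card X : ℝ) ≠ 0 := mod_cast Fintype.card_ne_zero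
  simp only [holevoChi, ensembleAverage_const_spikedDist, div_inv_eq_mul,
    sum_comp_spikedDist fun t ↦ t * logb 2 (t * Fintype.card X)]
  rw [sum_const, card_univ, nsmul_eq_mul, mul_inv_cancel_left₀ hcard, ← mul_assoc,
    mul_div_cancel₀ _ hN]

lemma holevoChi_uniform_spikedDist_le {δ : ℝ} (hδ : 1 ≤ δ * Fintype.card X) (hδ1 : δ ≤ 1) :
    holevoChi (fun _ : X ↦ (Fintype.card X : ℝ)⁻¹) (spikedDist δ) ≤
      δ * logb 2 (δ * Fintype.card X) := by
  have hN := card_sub_one_pos X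
  have h_off : 0 ≤ 1 - δ := sub_nonneg.mpr hδ1
  have ratio_nonneg : 0 ≤ (1 - δ) / (Fintype.card X - 1) * Fintype.card X := by positivity
  have ratio_le_one : (1 - δ) / (Fintype.card X - 1) * Fintype.card X ≤ 1 := by
    rw [div_mul_eq_mul_div, div_le_one hN]
    linarith
  rw [holevoChi_uniform_spikedDist]
  exact add_le_of_nonpos_right <|
    mul_nonpos_of_nonneg_of_nonpos h_off (logb_nonpos one_lt_two ratio_nonneg ratio_le_one)

end SpikedDist

theorem chi_separation_upper_bound_general (n : ℝ) (hn : 0 < n)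
    (ε : ℝ) (hε0 : 0 ≤ ε) (hε2 : ε ≤ 2)
    (δ : ℝ) (hδ : δ = (2 : ℝ) ^ (-(ε * n / 2)))
    (X : Type*) [Fintype X] [DecidableEq X] (hX : (Fintype.card X : ℝ) = 2 ^ n)
    (P : X → X → ℝ)
    (hP : ∀ x y, P x y = if y = x then δ else (1 - δ) / ((2 : ℝ) ^ n - 1))
    (Pbar : X → ℝ) (hPbar : ∀ y, Pbar y = ∑ x, ((2 : ℝ) ^ n)⁻¹ * P x y) :
    (∀ y, Pbar y = ((2 : ℝ) ^ n)⁻¹) ∧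
      ((2 : ℝ) ^ n)⁻¹ * ∑ x, ∑ y, P x y * logb 2 (P x y / Pbar y) ≤
        (2 : ℝ) ^ (-(ε * n / 2)) * n * (1 - ε / 2) := by
  have : Nontrivial X := by
    rw [← Fintype.one_lt_card_iff_nontrivial, ← Nat.one_lt_cast (α := ℝ), hX]
    exact one_lt_rpow one_lt_two hn
  have hδN : δ * Fintype.card X = 2 ^ (n * (1 - ε / 2)) := by
    rw [hδ, hX, ← rpow_add two_pos]
    ring_nf
  have hδN_ge : 1 ≤ δ * Fintype.card X :=
    hδN ▸ one_le_rpow one_le_two (mul_nonneg hn.le (by linarith))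
  have hδ1 : δ ≤ 1 := hδ ▸ rpow_le_one_of_one_le_of_nonpos one_le_two (by
    rw [neg_nonpos]; positivity)
  rw [← hX] at hP hPbar ⊢
  rw [← hδ]
  obtain rfl : P = spikedDist δ := funext₂ hP
  obtain rfl : Pbar = ensembleAverage (fun _ ↦ (Fintype.card X : ℝ)⁻¹) (spikedDist δ) :=
    funext hPbar
  refine ⟨ensembleAverage_const_spikedDist _ δ, ?_⟩
  have hχ := holevoChi_uniform_spikedDist_le hδN_ge hδ1
  rwa [hδN, logb_rpow two_pos one_lt_two.ne', holevoChi, ← mul_sum, ← mul_assoc] at hχ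

/-- Upper bound half of the exponential separation between ξ-information and
Holevo-χ information: for the ensemble `P_x(x) = 2^(−εn/2)`,
`P_x(y) = (1−2^(−εn/2))/(2^n−1)` for `y ≠ x`, the average `P̄` is uniform and
the Holevo-χ information is at most `2^(−εn/2)·n·(1−ε/2)`. -/
theorem chi_separation_upper_bound (n : ℕ) (hn : 1 ≤ n)
    (ε : ℝ) (hε0 : 0 < ε) (hε1 : ε < 1)
    (δ : ℝ) (hδ : δ = (2 : ℝ) ^ (-(ε * n / 2)))
    (X : Type*) [Fintype X] [DecidableEq X] (hX : Fintype.card X = 2 ^ n)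
    (P : X → X → ℝ)
    (hP : ∀ x y, P x y = if y = x then δ else (1 - δ) / ((2 : ℝ) ^ n - 1))
    (Pbar : X → ℝ) (hPbar : ∀ y, Pbar y = ∑ x, ((2 : ℝ) ^ n)⁻¹ * P x y) :
    (∀ y, Pbar y = ((2 : ℝ) ^ n)⁻¹) ∧
      ((2 : ℝ) ^ n)⁻¹ * ∑ x, ∑ y, P x y * Real.logb 2 (P x y / Pbar y) ≤
        (2 : ℝ) ^ (-(ε * n / 2)) * n * (1 - ε / 2) := by
  simpa only [rpow_natCast] using chi_separation_upper_bound_general n (mod_cast hn) ε hε0.le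
    (by linarith) δ hδ X (by simp [hX]) P (by simpa using hP) Pbar (by simpa using hPbar)
end
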